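/- Let μ be a Borel probability measure on SL₂(ℝ) with a finite exponential moment whose support generates a Zariski dense subgroup. Then there exists a constant C > 0 such that for every t ∈ ℝ, Σ_{n≥0} (μ ⊗ μ^{*n}){ (h, g) ∈ G × G : κ(g) < t ≤ κ(hg) } ≤ C; equivalently, the measure μ̄(M_t^+) of the set M_t^+ = { g ∈ Σ : κ(Tg) < t ≤ κ(g) } is bounded uniformly in t. -/

import Mathlib

open MeasureTheory Filter

noncomputable section

abbrev SL2 := Matrix.SpecialLinearGroup (Fin 2) ℝ

abbrev PX := Projectivization ℝ (Fin 2 → ℝ)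

instance : TopologicalSpace SL2 := instTopologicalSpaceSubtype
instance : TopologicalSpace PX := instTopologicalSpaceQuotient
instance : MeasurableSpace SL2 := borel _
instance : MeasurableSpace PX := borel _

/-- Euclidean norm on ℝ². -/
def enorm2 (v : Fin 2 → ℝ) : ℝ := Real.sqrt (v 0 ^ 2 + v 1 ^ 2)

/-- Operator norm of g ∈ SL₂(ℝ) w.r.t. the Euclidean norm on ℝ². -/
def opNorm (g : SL2) : ℝ :=
  ‖Matrix.toEuclideanCLM (𝕜 := ℝ) (n := Fin 2) (g : Matrix (Fin 2) (Fin 2) ℝ)‖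

/-- Cartan projection κ(g) = log ‖g‖. -/
def kappa (g : SL2) : ℝ := Real.log (opNorm g)

/-- The projective action of SL₂(ℝ) on ℙ(ℝ²). -/
def act (g : SL2) (x : PX) : PX :=
  Projectivization.map ((Matrix.SpecialLinearGroup.toLin' g).toLinearMap)
    (LinearEquiv.injective _) x

/-- The norm cocycle σ(g, ℝv) = log (‖gv‖/‖v‖). -/
def cocycle (g : SL2) (x : PX) : ℝ :=
  Real.log (enorm2 ((g : Matrix (Fin 2) (Fin 2) ℝ).mulVec x.rep) / enorm2 x.rep)

/-- The sine distance d(ℝv, ℝw) = |det(v,w)|/(‖v‖‖w‖) on ℙ(ℝ²). -/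
def projDist (x y : PX) : ℝ :=
  |x.rep 0 * y.rep 1 - x.rep 1 * y.rep 0| / (enorm2 x.rep * enorm2 y.rep)

/-- An angle θ(x) ∈ ℝ representing x = ℝ(cos θ, sin θ). -/
def pangle (x : PX) : ℝ := Complex.arg (x.rep 0 + x.rep 1 * Complex.I)

/-- The (topological) support of a measure. -/
def measSupp (μ : Measure SL2) : Set SL2 :=
  {g | ∀ U : Set SL2, IsOpen U → g ∈ U → 0 < μ U}

/-- μ has a finite exponential moment. -/
def HasExpMoment (μ : Measure SL2) : Prop :=
  ∃ ε₁ > (0 : ℝ), ∫⁻ g, ENNReal.ofReal (opNorm g ^ ε₁) ∂μ < ⊤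

/-- The group generated by the support of μ is Zariski dense in SL₂(ℝ),
equivalently it is not solvable. -/
def ZariskiDense (μ : Measure SL2) : Prop :=
  ¬ IsSolvable (Subgroup.closure (measSupp μ))

/-- ν is μ-stationary: μ ∗ ν = ν. -/
def IsStationaryMeasure (μ : Measure SL2) (ν : Measure PX) : Prop :=
  μ.bind (fun g => ν.map (act g)) = ν

/-- The product g₁ ⋯ gₙ of a word (g₁, …, gₙ). -/
def word {n : ℕ} (g : Fin n → SL2) : SL2 := (List.ofFn g).prod

/-- The product measure μ^{⊗n} on words of length n. -/
def μpi (μ : Measure SL2) (n : ℕ) : Measure (Fin n → SL2) := Measure.pi fun _ => μ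

/-! ### Basic setup: SU(1,1) model -/

instance : BorelSpace SL2 := ⟨rfl⟩
instance : SecondCountableTopology SL2 := by
  haveI : SecondCountableTopology (Matrix (Fin 2) (Fin 2) ℝ) :=
    inferInstanceAs (SecondCountableTopology (Fin 2 → Fin 2 → ℝ))
  exact TopologicalSpace.Subtype.secondCountableTopology _

abbrev S1 := Metric.sphere (0 : ℂ) 1

open ComplexConjugate

theorem continuous_entry (i j : Fin 2) :
    Continuous (fun g : SL2 => (g : Matrix (Fin 2) (Fin 2) ℝ) i j) := by
  have h : Continuous (fun g : SL2 => (g : Matrix (Fin 2) (Fin 2) ℝ)) := continuous_subtype_val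
  exact (continuous_apply j).comp ((continuous_apply i).comp h)

instance : ContinuousMul SL2 := by
  constructor
  have h : Continuous (fun g : SL2 => (g : Matrix (Fin 2) (Fin 2) ℝ)) := continuous_subtype_val
  refine Continuous.subtype_mk ?_ _
  exact (h.comp continuous_fst).matrix_mul (h.comp continuous_snd)

instance : ContinuousInv SL2 := by
  constructor
  have h : Continuous (fun g : SL2 => (g : Matrix (Fin 2) (Fin 2) ℝ)) := continuous_subtype_val
  refine Continuous.subtype_mk ?_ _
  exact h.matrix_adjugate

def cA (g : SL2) : ℂ := ⟨(g.1 0 0 + g.1 1 1) / 2, (g.1 1 0 - g.1 0 1) / 2⟩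
def cB (g : SL2) : ℂ := ⟨(g.1 0 0 - g.1 1 1) / 2, (g.1 1 0 + g.1 0 1) / 2⟩

theorem continuous_cmk {α : Type*} [TopologicalSpace α] {f g : α → ℝ} (hf : Continuous f)
    (hg : Continuous g) : Continuous (fun x => (⟨f x, g x⟩ : ℂ)) := by
  have : (fun x => (⟨f x, g x⟩ : ℂ)) = fun x => (f x : ℂ) + (g x : ℂ) * Complex.I := by
    funext x; apply Complex.ext <;> simp
  rw [this]; fun_prop

theorem continuous_cA : Continuous cA :=
  continuous_cmk (((continuous_entry 0 0).add (continuous_entry 1 1)).div_const 2)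
    (((continuous_entry 1 0).sub (continuous_entry 0 1)).div_const 2)

theorem continuous_cB : Continuous cB :=
  continuous_cmk (((continuous_entry 0 0).sub (continuous_entry 1 1)).div_const 2)
    (((continuous_entry 1 0).add (continuous_entry 0 1)).div_const 2)

theorem det_eq (g : SL2) : g.1 0 0 * g.1 1 1 - g.1 0 1 * g.1 1 0 = 1 := by
  have := g.2; rwa [Matrix.det_fin_two] at this

theorem normSq_sub (g : SL2) : Complex.normSq (cA g) - Complex.normSq (cB g) = 1 := by
  have := det_eq g
  simp only [Complex.normSq_apply, cA, cB]; linarith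

theorem norm_sq_sub (g : SL2) : ‖cA g‖ ^ 2 - ‖cB g‖ ^ 2 = 1 := by
  rw [← Complex.normSq_eq_norm_sq, ← Complex.normSq_eq_norm_sq]; exact normSq_sub g

theorem cA_mul (g h : SL2) : cA (g * h) = cA g * cA h + cB g * conj (cB h) := by
  apply Complex.ext <;> simp [cA, cB, Matrix.mul_apply, Fin.sum_univ_two] <;> ring

theorem cB_mul (g h : SL2) : cB (g * h) = cA g * cB h + cB g * conj (cA h) := by
  apply Complex.ext <;> simp [cA, cB, Matrix.mul_apply, Fin.sum_univ_two] <;> ring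

theorem cA_one : cA 1 = 1 := by apply Complex.ext <;> simp [cA]
theorem cB_one : cB 1 = 0 := by apply Complex.ext <;> simp [cB]

theorem sl2_ext {g h : SL2} (h1 : cA g = cA h) (h2 : cB g = cB h) : g = h := by
  have a := congrArg Complex.re h1
  have b := congrArg Complex.im h1
  have c := congrArg Complex.re h2
  have d := congrArg Complex.im h2
  simp only [cA, cB] at a b c d
  ext i j
  fin_cases i <;> fin_cases j <;> simp <;> linarith

/-- The automorphy factor. -/
def jj (g : SL2) (z : S1) : ℂ := cA g * z + cB g

theorem S1_norm (z : S1) : ‖(z : ℂ)‖ = 1 := by simpa using z.2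
theorem S1_ne (z : S1) : (z : ℂ) ≠ 0 := by
  intro h; have := S1_norm z; rw [h] at this; simp at this
theorem S1_mul_conj (z : S1) : (z : ℂ) * conj (z : ℂ) = 1 := by
  rw [Complex.mul_conj, Complex.normSq_eq_norm_sq, S1_norm]; simp

/-- The norm in the form `|A| + |B|`. -/
def nrm (g : SL2) : ℝ := ‖cA g‖ + ‖cB g‖

theorem norm_cB_lt (g : SL2) : ‖cB g‖ < ‖cA g‖ := by
  have := norm_sq_sub g
  nlinarith [norm_nonneg (cA g), norm_nonneg (cB g)]

theorem one_le_nrm (g : SL2) : 1 ≤ nrm g := by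
  have := norm_sq_sub g
  unfold nrm
  nlinarith [norm_nonneg (cA g), norm_nonneg (cB g)]

theorem nrm_inv (g : SL2) : ‖cA g‖ - ‖cB g‖ = (nrm g)⁻¹ := by
  have := norm_sq_sub g
  have h1 := one_le_nrm g
  apply eq_inv_of_mul_eq_one_left
  unfold nrm; linarith

theorem jj_le (g : SL2) (z : S1) : ‖jj g z‖ ≤ nrm g := by
  unfold jj nrm
  refine (norm_add_le _ _).trans ?_
  rw [norm_mul, S1_norm, mul_one]

theorem le_jj (g : SL2) (z : S1) : (nrm g)⁻¹ ≤ ‖jj g z‖ := by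
  rw [← nrm_inv]
  unfold jj
  have := norm_sub_norm_le (cA g * z) (-cB g)
  rw [norm_mul, S1_norm, mul_one, norm_neg, sub_neg_eq_add] at this
  exact this

theorem jj_pos (g : SL2) (z : S1) : 0 < ‖jj g z‖ :=
  lt_of_lt_of_le (inv_pos.2 (by linarith [one_le_nrm g])) (le_jj g z)

theorem jj_ne (g : SL2) (z : S1) : jj g z ≠ 0 := norm_pos_iff.1 (jj_pos g z)

theorem abs_log_jj (g : SL2) (z : S1) : |Real.log ‖jj g z‖| ≤ Real.log (nrm g) := by
  have h1 := one_le_nrm g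
  rw [abs_le]; constructor
  · rw [← Real.log_inv]
    exact Real.log_le_log (inv_pos.2 (by linarith)) (le_jj g z)
  · exact Real.log_le_log (jj_pos g z) (jj_le g z)

/-- The Moebius action on the circle. -/
def mob (g : SL2) (z : S1) : S1 := ⟨jj g z / (z * conj (jj g z)), by
  have := jj_pos g z
  rw [mem_sphere_zero_iff_norm, norm_div, norm_mul, S1_norm, RCLike.norm_conj, one_mul, div_self this.ne']⟩

theorem coe_mob (g : SL2) (z : S1) : (mob g z : ℂ) = jj g z / (z * conj (jj g z)) := rfl

theorem cj_ne (g : SL2) (z : S1) : conj (jj g z) ≠ 0 := by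
  simpa using jj_ne g z

theorem jj_mul (g h : SL2) (z : S1) : jj (g * h) z = z * conj (jj h z) * jj g (mob h z) := by
  have h1 := S1_ne z
  have h2 := cj_ne h z
  have e : (z : ℂ) * conj (jj h z) * jj g (mob h z)
      = cA g * jj h z + cB g * (z * conj (jj h z)) := by
    have e2 : jj g (mob h z) = cA g * (jj h z / (z * conj (jj h z))) + cB g := rfl
    rw [e2]
    generalize jj h z = b at *
    field_simp
  rw [e]
  have h3 : (z : ℂ) * conj (jj h z) = conj (cB h) * z + conj (cA h) := by
    unfold jj
    rw [map_add, map_mul]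
    linear_combination (conj (cA h)) * S1_mul_conj z
  rw [h3]; unfold jj
  rw [cA_mul, cB_mul]; ring

theorem norm_jj_mul (g h : SL2) (z : S1) : ‖jj (g * h) z‖ = ‖jj h z‖ * ‖jj g (mob h z)‖ := by
  rw [jj_mul, norm_mul, norm_mul, S1_norm, RCLike.norm_conj, one_mul]

theorem jj_one (z : S1) : jj 1 z = z := by simp [jj, cA_one, cB_one]

theorem mob_one (z : S1) : mob 1 z = z := by
  apply Subtype.ext
  rw [coe_mob, jj_one, S1_mul_conj, div_one]

theorem mob_mul (g h : SL2) (z : S1) : mob (g * h) z = mob g (mob h z) := by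
  apply Subtype.ext
  rw [coe_mob, coe_mob g, jj_mul]
  have h1 := S1_ne z
  have h2 := cj_ne h z
  have h3 := jj_ne h z
  have h4 := cj_ne g (mob h z)
  have h5 := S1_mul_conj z
  have h6 : conj (z : ℂ) ≠ 0 := by simpa using h1
  rw [coe_mob h]
  simp only [map_mul, Complex.conj_conj]
  generalize jj g (mob h z) = a at *
  generalize jj h z = b at *
  field_simp
  linear_combination (-a : ℂ) * h5

theorem mob_inv_mob (g : SL2) (z : S1) : mob g⁻¹ (mob g z) = z := by
  rw [← mob_mul, inv_mul_cancel, mob_one]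
theorem mob_mob_inv (g : SL2) (z : S1) : mob g (mob g⁻¹ z) = z := by
  rw [← mob_mul, mul_inv_cancel, mob_one]
theorem mob_injective (g : SL2) : Function.Injective (mob g) :=
  Function.LeftInverse.injective (mob_inv_mob g)

theorem continuous_jj : Continuous (fun p : SL2 × S1 => jj p.1 p.2) :=
  ((continuous_cA.comp continuous_fst).mul (continuous_subtype_val.comp continuous_snd)).add
    (continuous_cB.comp continuous_fst)

theorem continuous_mob : Continuous (fun p : SL2 × S1 => mob p.1 p.2) := by
  refine Continuous.subtype_mk ?_ _
  refine continuous_jj.div₀ ((continuous_subtype_val.comp continuous_snd).mul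
    (Complex.continuous_conj.comp continuous_jj)) ?_
  intro _
  exact mul_ne_zero (S1_ne _) (cj_ne _ _)

theorem continuous_log_jj : Continuous (fun p : SL2 × S1 => Real.log ‖jj p.1 p.2‖) :=
  continuous_jj.norm.log (fun p => (jj_pos _ _).ne')

theorem continuous_nrm : Continuous nrm := continuous_cA.norm.add continuous_cB.norm

theorem mob_dist (g : SL2) (z w : S1) :
    ‖(mob g z : ℂ) - mob g w‖ * (‖jj g z‖ * ‖jj g w‖) = ‖(z : ℂ) - w‖ := by
  have h1 := S1_ne z
  have h2 := cj_ne g z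
  have h3 := S1_ne w
  have h4 := cj_ne g w
  have key : (mob g z : ℂ) - mob g w = (z - w) / ((z * conj (jj g z)) * (w * conj (jj g w))) := by
    rw [coe_mob, coe_mob, div_sub_div _ _ (mul_ne_zero h1 h2) (mul_ne_zero h3 h4)]
    congr 1
    have e : ∀ z : S1, (z : ℂ) * conj (jj g z) = conj (cB g) * z + conj (cA g) := by
      intro z
      unfold jj
      rw [map_add, map_mul]
      linear_combination (conj (cA g)) * S1_mul_conj z
    rw [e, e]
    have n := normSq_sub g
    have n' : cA g * conj (cA g) - cB g * conj (cB g) = 1 := by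
      rw [Complex.mul_conj, Complex.mul_conj, ← Complex.ofReal_sub, n]; simp
    unfold jj
    linear_combination ((z : ℂ) - w) * n'
  rw [key, norm_div]
  simp only [norm_mul, S1_norm, RCLike.norm_conj, one_mul]
  have := jj_pos g z
  have := jj_pos g w
  field_simp

theorem exists_jj_eq (g : SL2) : ∃ z : S1, ‖jj g z‖ = nrm g := by
  have hA : 0 < ‖cA g‖ := lt_of_le_of_lt (norm_nonneg _) (norm_cB_lt g)
  by_cases hB : cB g = 0
  · refine ⟨⟨1, by simp⟩, ?_⟩
    simp [jj, nrm, hB]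
  · have hA0 : cA g ≠ 0 := norm_pos_iff.1 hA
    have hB' : 0 < ‖cB g‖ := norm_pos_iff.2 hB
    refine ⟨⟨(cB g / ‖cB g‖) / (cA g / ‖cA g‖), ?_⟩, ?_⟩
    · simp [norm_div, hA.ne', hB'.ne']
    · have hA1 : (‖cA g‖ : ℂ) ≠ 0 := by exact_mod_cast hA.ne'
      have hB1 : (‖cB g‖ : ℂ) ≠ 0 := by exact_mod_cast hB'.ne'
      have : jj g ⟨(cB g / ‖cB g‖) / (cA g / ‖cA g‖), by simp [norm_div, hA.ne', hB'.ne']⟩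
          = (cB g / ‖cB g‖) * ((‖cA g‖ + ‖cB g‖ : ℝ) : ℂ) := by
        simp only [jj]
        push_cast
        field_simp
      rw [this, norm_mul, norm_div, Complex.norm_real, norm_norm, div_self hB'.ne', one_mul,
        Complex.norm_real, Real.norm_eq_abs, abs_of_nonneg (by positivity)]
      rfl

theorem opNorm_eq (g : SL2) : opNorm g = nrm g := by
  have hv : ∀ v : EuclideanSpace ℝ (Fin 2),
      ‖Matrix.toEuclideanCLM (𝕜 := ℝ) (n := Fin 2) (g : Matrix (Fin 2) (Fin 2) ℝ) v‖
        = ‖cA g * ⟨v 0, v 1⟩ + cB g * conj (⟨v 0, v 1⟩ : ℂ)‖ := by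
    intro v
    rw [← sq_eq_sq₀ (norm_nonneg _) (norm_nonneg _), EuclideanSpace.norm_sq_eq,
      ← Complex.normSq_eq_norm_sq, Complex.normSq_apply]
    have : ∀ i, (Matrix.toEuclideanCLM (𝕜 := ℝ) (n := Fin 2) (g : Matrix (Fin 2) (Fin 2) ℝ) v) i
       = g.1 i 0 * v 0 + g.1 i 1 * v 1 := by
      intro i
      simp [Matrix.mulVec, dotProduct, Fin.sum_univ_two]
    simp only [Fin.sum_univ_two, this, Real.norm_eq_abs, sq_abs, cA, cB, Complex.add_re,
      Complex.mul_re, Complex.conj_re, Complex.conj_im, Complex.add_im, Complex.mul_im]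
    ring
  have hn : ∀ v : EuclideanSpace ℝ (Fin 2), ‖(⟨v 0, v 1⟩ : ℂ)‖ = ‖v‖ := by
    intro v
    rw [← sq_eq_sq₀ (norm_nonneg _) (norm_nonneg _), EuclideanSpace.norm_sq_eq,
      ← Complex.normSq_eq_norm_sq, Complex.normSq_apply]
    simp [Fin.sum_univ_two, sq]
  unfold opNorm
  apply le_antisymm
  · refine ContinuousLinearMap.opNorm_le_bound _ (by linarith [one_le_nrm g]) ?_
    intro v
    rw [hv]
    refine (norm_add_le _ _).trans ?_
    rw [norm_mul, norm_mul, RCLike.norm_conj, hn, ← add_mul]; rfl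
  · obtain ⟨z, hz⟩ := exists_jj_eq g
    obtain ⟨u, hu⟩ : ∃ u : ℂ, u ^ 2 = z := by
      exact ⟨(z : ℂ) ^ (1 / 2 : ℂ), by rw [← Complex.cpow_nat_mul]; simp⟩
    have hu1 : ‖u‖ = 1 := by
      have : ‖u‖ ^ 2 = 1 := by rw [← norm_pow, hu, S1_norm]
      nlinarith [norm_nonneg u]
    have huc : u * conj u = 1 := by
      rw [Complex.mul_conj, Complex.normSq_eq_norm_sq, hu1]; simp
    have h2 := ContinuousLinearMap.le_opNorm (Matrix.toEuclideanCLM (𝕜 := ℝ) (n := Fin 2) (g : Matrix (Fin 2) (Fin 2) ℝ)) (!₂[u.re, u.im])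
    rw [hv, ← hn] at h2
    have e : (⟨(!₂[u.re, u.im] : EuclideanSpace ℝ (Fin 2)) 0, (!₂[u.re, u.im] : EuclideanSpace ℝ (Fin 2)) 1⟩ : ℂ) = u := by
      apply Complex.ext <;> simp
    rw [e, hu1, mul_one] at h2
    rw [← hz]
    refine le_trans (le_of_eq ?_) h2
    have : jj g z = u * (cA g * u + cB g * conj u) := by
      unfold jj; rw [← hu]; linear_combination -cB g * huc
    rw [this, norm_mul, hu1, one_mul]

theorem kappa_eq (g : SL2) : kappa g = Real.log (nrm g) := by rw [kappa, opNorm_eq]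

/-! ### Group theory and dynamics -/

theorem cA_re_trace (g : SL2) : (cA g).re = (g.1 0 0 + g.1 1 1) / 2 := rfl

theorem comm_of_cB_zero (a b : SL2) (h0 : cB a = 0) (h1 : 1 ≤ (cA a).re ^ 2) : a * b = b * a := by
  have h2 := normSq_sub a
  rw [h0, Complex.normSq_apply] at h2
  have h3 : (cA a).im = 0 := by
    simp only [map_zero, sub_zero] at h2
    nlinarith [sq_nonneg (cA a).im]
  have h4 : conj (cA a) = cA a := Complex.conj_eq_iff_im.2 h3
  apply sl2_ext
  · rw [cA_mul, cA_mul, h0]; simp [mul_comm]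
  · rw [cB_mul, cB_mul, h0, h4]; simp [mul_comm]

theorem trace_comm (a b : SL2) : (cA (a * b * a⁻¹ * b⁻¹)).re * 2 = 2 +
    ((a.1 0 1 * b.1 1 0 - b.1 0 1 * a.1 1 0) ^ 2 +
     ((a.1 0 0 - a.1 1 1) * b.1 0 1 - (b.1 0 0 - b.1 1 1) * a.1 0 1) *
     (a.1 1 0 * (b.1 0 0 - b.1 1 1) - b.1 1 0 * (a.1 0 0 - a.1 1 1))) := by
  have h1 := det_eq a
  have h2 := det_eq b
  simp only [cA, Matrix.SpecialLinearGroup.coe_mul, Matrix.SpecialLinearGroup.coe_inv,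
    Matrix.adjugate_fin_two, Matrix.mul_apply, Fin.sum_univ_two]
  simp
  linear_combination 2 * h1 + 2 * (a.1 0 0 * a.1 1 1 - a.1 0 1 * a.1 1 0) * h2

theorem exists_nonelliptic (a b : SL2) (hab : a * b ≠ b * a) :
    ∃ h ∈ Subgroup.closure {a, b}, 1 ≤ (cA h).re ^ 2 ∧ cB h ≠ 0 := by
  have ha : a ∈ Subgroup.closure {a, b} := Subgroup.subset_closure (by simp)
  have hb : b ∈ Subgroup.closure {a, b} := Subgroup.subset_closure (by simp)
  by_cases h1 : 1 ≤ (cA a).re ^ 2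
  · exact ⟨a, ha, h1, fun h0 => hab (comm_of_cB_zero a b h0 h1)⟩
  · refine ⟨a * b * a⁻¹ * b⁻¹, mul_mem (mul_mem (mul_mem ha hb) (inv_mem ha)) (inv_mem hb), ?_⟩
    have ht := trace_comm a b
    have hd := det_eq a
    rw [cA_re_trace] at h1
    set n1 := a.1 0 1 * b.1 1 0 - b.1 0 1 * a.1 1 0 with hn1
    set n2 := (a.1 0 0 - a.1 1 1) * b.1 0 1 - (b.1 0 0 - b.1 1 1) * a.1 0 1 with hn2
    set n3 := a.1 1 0 * (b.1 0 0 - b.1 1 1) - b.1 1 0 * (a.1 0 0 - a.1 1 1) with hn3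
    have horth : (a.1 0 0 - a.1 1 1) * n1 + a.1 0 1 * n3 + a.1 1 0 * n2 = 0 := by
      rw [hn1, hn2, hn3]; ring
    have hell : (a.1 0 0 - a.1 1 1) ^ 2 + 4 * (a.1 0 1 * a.1 1 0) < 0 := by
      push Not at h1
      nlinarith
    have hne : ¬ (n1 = 0 ∧ n2 = 0 ∧ n3 = 0) := by
      rintro ⟨e1, e2, e3⟩
      apply hab
      ext i j
      fin_cases i <;> fin_cases j <;>
        simp [Matrix.mul_apply, Fin.sum_univ_two] <;> rw [hn1] at e1 <;>
        rw [hn2] at e2 <;> rw [hn3] at e3 <;> linarith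
    have hpos : 0 < n1 ^ 2 + n2 * n3 := by
      generalize a.1 0 0 - a.1 1 1 = x at *
      generalize a.1 0 1 = q at *
      generalize a.1 1 0 = r at *
      have hqr : q * r < 0 := by nlinarith [sq_nonneg x]
      by_cases e1 : n1 = 0
      · have h2 : q * n3 = - (r * n2) := by rw [e1] at horth; linarith
        have h3 : n2 ≠ 0 := by
          intro e2
          apply hne
          refine ⟨e1, e2, ?_⟩
          rw [e2, mul_zero, neg_zero] at h2
          rcases mul_eq_zero.1 h2 with h | h
          · rw [h] at hqr; simp at hqr
          · exact h
        have h4 : (q * r) * (n2 * n3) = - (r * n2) ^ 2 := by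
          linear_combination r * n2 * h2
        have h5 : r ≠ 0 := by rintro rfl; simp at hqr
        have h6 : 0 < (r * n2) ^ 2 := by positivity
        rw [e1]
        nlinarith
      · have h2 : 0 < n1 ^ 2 := by positivity
        have h3 : x ^ 2 * n1 ^ 2 = (q * n3 + r * n2) ^ 2 := by
          linear_combination (x * n1 - q * n3 - r * n2) * horth
        have h4 : (x ^ 2 + 4 * (q * r)) * n1 ^ 2 < 0 := mul_neg_of_neg_of_pos hell h2
        nlinarith [sq_nonneg (q * n3 - r * n2)]
    have hc : 1 < (cA (a * b * a⁻¹ * b⁻¹)).re := by linarith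
    refine ⟨by nlinarith, fun h0 => ?_⟩
    have h2 := normSq_sub (a * b * a⁻¹ * b⁻¹)
    rw [h0, Complex.normSq_apply] at h2
    simp only [map_zero, sub_zero] at h2
    nlinarith [sq_nonneg (cA (a * b * a⁻¹ * b⁻¹)).im]

/-- Fixed point indicator. -/
def DD (h : SL2) (z : S1) : ℝ := (jj h z * conj (z : ℂ)).im

theorem continuous_DD (h : SL2) : Continuous (DD h) := by
  have : Continuous (fun z : S1 => jj h z) := continuous_jj.comp (Continuous.prodMk_right h)
  exact Complex.continuous_im.comp
    (this.mul (Complex.continuous_conj.comp continuous_subtype_val))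

theorem DD_mob (h : SL2) (z : S1) : DD h (mob h z) * ‖jj h z‖ ^ 2 = DD h z := by
  -- both sides as complex numbers
  have h1 := S1_ne z
  have h2 := cj_ne h z
  have h3 := jj_ne h z
  have hz := S1_mul_conj z
  have n := normSq_sub h
  have n' : cA h * conj (cA h) - cB h * conj (cB h) = 1 := by
    rw [Complex.mul_conj, Complex.mul_conj, ← Complex.ofReal_sub, n]; simp
  have key : jj h (mob h z) * conj ((mob h z : S1) : ℂ) * (jj h z * conj (jj h z))
      = cA h * (jj h z * conj (jj h z)) + cB h * (conj (jj h z) * conj (jj h z) * z) := by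
    have e2 : jj h (mob h z) = cA h * (mob h z : ℂ) + cB h := rfl
    have e3 := S1_mul_conj (mob h z)
    have e4 : conj ((mob h z : S1) : ℂ) * jj h z = conj (jj h z) * z := by
      rw [coe_mob, map_div₀, map_mul, Complex.conj_conj]
      have : conj (z : ℂ) ≠ 0 := by simpa using h1
      field_simp
      linear_combination (-1 : ℂ) * hz
    rw [e2]
    linear_combination cA h * (jj h z * conj (jj h z)) * e3 + cB h * conj (jj h z) * e4
  have hj : jj h z * conj (jj h z) = ((‖jj h z‖ ^ 2 : ℝ) : ℂ) := by
    rw [Complex.mul_conj, Complex.normSq_eq_norm_sq]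
  have l : DD h (mob h z) * ‖jj h z‖ ^ 2
      = (jj h (mob h z) * conj ((mob h z : S1) : ℂ) * (jj h z * conj (jj h z))).im := by
    rw [hj, Complex.im_mul_ofReal]; rfl
  rw [l, key]
  have key2 : cA h * (jj h z * conj (jj h z)) + cB h * (conj (jj h z) * conj (jj h z) * z)
      = ((2 * (cA h).re : ℝ) : ℂ) * (jj h z * conj (jj h z)) - conj (jj h z * conj (z : ℂ)) := by
    have hτ : ((2 * (cA h).re : ℝ) : ℂ) = cA h + conj (cA h) := by
      rw [Complex.add_conj]
    have h3 : (z : ℂ) * conj (jj h z) = conj (cB h) * z + conj (cA h) := by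
      unfold jj
      rw [map_add, map_mul]
      linear_combination (conj (cA h)) * hz
    have h4 : jj h z = cA h * z + cB h := rfl
    rw [hτ, map_mul, Complex.conj_conj]
    linear_combination cB h * conj (jj h z) * h3 - conj (jj h z) * conj (cA h) * h4
      - conj (jj h z) * z * n'
  rw [key2, hj, ← Complex.ofReal_mul, Complex.sub_im, Complex.ofReal_im, Complex.conj_im]
  simp [DD]

theorem DD_pow (h : SL2) (n : ℕ) (z : S1) :
    DD h (mob (h ^ n) z) * ‖jj (h ^ n) z‖ ^ 2 = DD h z := by
  induction n generalizing z with
  | zero => simp [mob_one, jj_one, S1_norm]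
  | succ n ih =>
    rw [pow_succ, norm_jj_mul, mob_mul, mul_pow, mul_comm (‖jj h z‖ ^ 2), ← mul_assoc, ih, DD_mob]

theorem pow_coeff (h : SL2) (hh : 1 ≤ (cA h).re ^ 2) (n : ℕ) : ∃ a b : ℝ,
    cA (h ^ (n + 1)) = a * cA h - b ∧ cB (h ^ (n + 1)) = a * cB h ∧ (n : ℝ) + 1 ≤ |a| ∧
      |b| + 1 ≤ |a| := by
  induction n with
  | zero => exact ⟨1, 0, by simp, by simp, by simp, by simp⟩
  | succ n ih =>
    obtain ⟨a, b, h1, h2, h3, h4⟩ := ih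
    have n0 := normSq_sub h
    have n' : cA h * conj (cA h) - cB h * conj (cB h) = 1 := by
      rw [Complex.mul_conj, Complex.mul_conj, ← Complex.ofReal_sub, n0]; simp
    have hτ : ((2 * (cA h).re : ℝ) : ℂ) = cA h + conj (cA h) := by
      rw [Complex.add_conj]
    refine ⟨2 * (cA h).re * a - b, a, ?_, ?_, ?_⟩
    · rw [pow_succ, cA_mul, h1, h2, Complex.ofReal_sub, Complex.ofReal_mul, hτ]
      linear_combination (-(a : ℂ)) * n'
    · rw [pow_succ, cB_mul, h1, h2, Complex.ofReal_sub, Complex.ofReal_mul, hτ]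
      ring
    · have h5 : 1 ≤ |(cA h).re| := by
        rw [← one_le_sq_iff₀ (abs_nonneg _), sq_abs]; exact hh
      have h6 : 2 * |a| ≤ |2 * (cA h).re * a| := by
        rw [abs_mul, abs_mul, abs_two]
        nlinarith [abs_nonneg a]
      have h7 := abs_sub_abs_le_abs_sub (2 * (cA h).re * a) b
      push_cast
      constructor <;> linarith

theorem le_jj_pow (h : SL2) (hh : 1 ≤ (cA h).re ^ 2) (n : ℕ) (z : S1) :
    n * |DD h z| ≤ ‖jj (h ^ n) z‖ := by
  cases n with
  | zero => simp
  | succ n =>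
    obtain ⟨a, b, h1, h2, h3, -⟩ := pow_coeff h hh n
    have e : jj (h ^ (n + 1)) z * conj (z : ℂ) = a * (jj h z * conj (z : ℂ)) - b := by
      unfold jj; rw [h1, h2]
      linear_combination (-(b : ℂ)) * S1_mul_conj z
    have e1 : (jj (h ^ (n + 1)) z * conj (z : ℂ)).im = a * DD h z := by
      rw [e]; simp only [Complex.sub_im, Complex.ofReal_im, sub_zero, Complex.re_ofReal_mul,
        Complex.im_ofReal_mul, DD]
    have e2 : ‖jj (h ^ (n + 1)) z * conj (z : ℂ)‖ = ‖jj (h ^ (n + 1)) z‖ := by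
      rw [norm_mul, RCLike.norm_conj, S1_norm, mul_one]
    rw [← e2]
    refine le_trans ?_ (Complex.abs_im_le_norm _)
    rw [e1, abs_mul]
    push_cast
    exact mul_le_mul_of_nonneg_right h3 (abs_nonneg _)

theorem DD_tendsto (h : SL2) (hh : 1 ≤ (cA h).re ^ 2) (z : S1) :
    Tendsto (fun n : ℕ => |DD h (mob (h ^ n) z)|) atTop (nhds 0) := by
  by_cases hz : DD h z = 0
  · have : (fun n : ℕ => |DD h (mob (h ^ n) z)|) = fun _ => 0 := by
      funext n
      have := DD_pow h n z
      rw [hz] at this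
      rcases mul_eq_zero.1 this with h1 | h1
      · rw [h1, abs_zero]
      · exact absurd h1 (pow_pos (jj_pos _ _) 2).ne'
    rw [this]; exact tendsto_const_nhds
  · have hp : 0 < |DD h z| := abs_pos.2 hz
    have l : Tendsto (fun n : ℕ => (1 / |DD h z|) * (1 / (n : ℝ))) atTop (nhds 0) := by
      simpa using (tendsto_one_div_atTop_nhds_zero_nat (𝕜 := ℝ)).const_mul (1 / |DD h z|)
    refine tendsto_of_tendsto_of_tendsto_of_le_of_le' tendsto_const_nhds l
      (Eventually.of_forall fun n => abs_nonneg _) ?_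
    filter_upwards [eventually_ge_atTop 1] with n hn
    have hn' : (1 : ℝ) ≤ n := by exact_mod_cast hn
    have h1 := DD_pow h n z
    have h2 := le_jj_pow h hh n z
    have h3 : |DD h (mob (h ^ n) z)| * ‖jj (h ^ n) z‖ ^ 2 = |DD h z| := by
      rw [← h1, abs_mul, abs_of_nonneg (sq_nonneg ‖jj (h ^ n) z‖)]
    have h4 : |DD h (mob (h ^ n) z)| * (n * |DD h z|) ^ 2 ≤ |DD h z| := by
      rw [← h3]
      refine mul_le_mul_of_nonneg_left ?_ (abs_nonneg _)
      rw [h3]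
      exact pow_le_pow_left₀ (by positivity) h2 2
    have h5 : |DD h (mob (h ^ n) z)| * (n * n * |DD h z|) ≤ 1 := by
      have : (|DD h (mob (h ^ n) z)| * (n * n * |DD h z|)) * |DD h z| ≤ 1 * |DD h z| := by
        linarith
      exact le_of_mul_le_mul_right this hp
    have h6 : |DD h (mob (h ^ n) z)| * (n * |DD h z|) ≤ 1 := by
      refine le_trans ?_ h5
      refine mul_le_mul_of_nonneg_left ?_ (abs_nonneg _)
      have : (n : ℝ) * |DD h z| * 1 ≤ n * |DD h z| * n :=
        mul_le_mul_of_nonneg_left hn' (by positivity)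
      linarith
    rw [div_mul_div_comm, one_mul, le_div_iff₀ (by positivity)]
    linarith

theorem DD_finset (h : SL2) (hh : 1 ≤ (cA h).re ^ 2) (A : Finset S1)
    (hA : ∀ z ∈ A, mob h z ∈ A) : ∀ z ∈ A, DD h z = 0 := by
  classical
  have hinv : ∀ n : ℕ, A.image (mob (h ^ n)) = A := by
    intro n
    have hm : ∀ z ∈ A, mob (h ^ n) z ∈ A := by
      induction n with
      | zero => intro z hz; simpa [mob_one] using hz
      | succ n ih => intro z hz; rw [pow_succ, mob_mul]; exact ih _ (hA z hz)
    apply Finset.eq_of_subset_of_card_le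
    · intro w hw
      obtain ⟨z, hz, rfl⟩ := Finset.mem_image.1 hw
      exact hm z hz
    · rw [Finset.card_image_of_injective _ (mob_injective _)]
  have hsum : ∀ n : ℕ, ∑ z ∈ A, |DD h (mob (h ^ n) z)| = ∑ z ∈ A, |DD h z| := by
    intro n
    conv_rhs => rw [← hinv n]
    rw [Finset.sum_image (fun x _ y _ hxy => mob_injective _ hxy)]
  have l : Tendsto (fun n : ℕ => ∑ z ∈ A, |DD h (mob (h ^ n) z)|) atTop (nhds (∑ z ∈ A, (0 : ℝ))) := by
    apply tendsto_finsetSum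
    intro z _
    exact DD_tendsto h hh z
  simp only [hsum, Finset.sum_const_zero] at l
  have e := tendsto_nhds_unique tendsto_const_nhds l
  intro z hz
  exact abs_eq_zero.1 ((Finset.sum_eq_zero_iff_of_nonneg (fun _ _ => abs_nonneg _)).1 e z hz)

theorem continuous_mob_left (g : SL2) : Continuous (mob g) := by
  have h : Continuous (fun z : S1 => ((g, z) : SL2 × S1)) := by fun_prop
  have h2 := continuous_mob.comp h
  exact h2

theorem DD_ae (h : SL2) (hh : 1 ≤ (cA h).re ^ 2) (ν : Measure S1) [IsProbabilityMeasure ν]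
    (hν : ν.map (mob h) = ν) : ∀ᵐ z ∂ν, DD h z = 0 := by
  have hc : ∀ g : SL2, Continuous (mob g) := continuous_mob_left
  have hpow : ∀ n : ℕ, ν.map (mob (h ^ n)) = ν := by
    intro n
    induction n with
    | zero =>
      have : mob (h ^ 0) = id := by funext z; simp [mob_one]
      rw [this, Measure.map_id]
    | succ n ih =>
      have : mob (h ^ (n + 1)) = mob (h ^ n) ∘ mob h := by
        funext z; rw [pow_succ, mob_mul]; rfl
      rw [this, ← Measure.map_map (hc _).measurable (hc _).measurable, hν, ih]
  have hI : ∀ n : ℕ, ∫ z, |DD h (mob (h ^ n) z)| ∂ν = ∫ z, |DD h z| ∂ν := by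
    intro n
    conv_rhs => rw [← hpow n]
    rw [integral_map (hc _).aemeasurable]
    exact (continuous_DD h).abs.aestronglyMeasurable
  have hb : ∀ z, |DD h z| ≤ nrm h := by
    intro z
    refine (Complex.abs_im_le_norm _).trans ?_
    rw [norm_mul, RCLike.norm_conj, S1_norm, mul_one]
    exact jj_le h z
  have l : Tendsto (fun n : ℕ => ∫ z, |DD h (mob (h ^ n) z)| ∂ν) atTop (nhds (∫ _z, (0 : ℝ) ∂ν)) := by
    refine tendsto_integral_of_dominated_convergence (fun _ => nrm h) ?_ (integrable_const _) ?_ ?_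
    · intro n
      exact ((continuous_DD h).comp (hc _)).abs.aestronglyMeasurable
    · intro n
      refine Eventually.of_forall fun z => ?_
      rw [Real.norm_eq_abs, abs_abs]; exact hb _
    · exact Eventually.of_forall fun z => DD_tendsto h hh z
  simp only [hI, integral_zero] at l
  have e := tendsto_nhds_unique tendsto_const_nhds l
  have hintg : Integrable (fun z => |DD h z|) ν := by
    refine Integrable.mono' (integrable_const (nrm h)) (continuous_DD h).abs.aestronglyMeasurable ?_
    refine Eventually.of_forall fun z => ?_
    rw [Real.norm_eq_abs, abs_abs]; exact hb _
  have := (integral_eq_zero_iff_of_nonneg (fun z => abs_nonneg _) hintg).1 e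
  filter_upwards [this] with z hz
  exact abs_eq_zero.1 hz

theorem DD_zero_pair (h : SL2) (hB : cB h ≠ 0) (z₁ : S1) (h1 : DD h z₁ = 0) :
    ∃ z₂ : S1, ∀ z, DD h z = 0 → z = z₁ ∨ z = z₂ := by
  have hB' : conj (cB h) ≠ 0 := by simpa using hB
  have hBn : ‖cB h‖ ≠ 0 := norm_ne_zero_iff.2 hB
  refine ⟨⟨-cB h / (conj (cB h) * z₁), ?_⟩, ?_⟩
  · rw [mem_sphere_zero_iff_norm, norm_div, norm_mul, S1_norm, RCLike.norm_conj, norm_neg,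
      mul_one, div_self hBn]
  · intro z hz
    by_cases hzz : z = z₁
    · exact Or.inl hzz
    right
    have e : ∀ w : S1, DD h w = 0 → cA h + cB h * conj (w : ℂ) = conj (cA h) + conj (cB h) * w := by
      intro w hw
      have := Complex.conj_eq_iff_im.2 hw
      simp only [map_mul, jj, map_add, Complex.conj_conj] at this
      linear_combination (conj (cA h) - cA h) * S1_mul_conj w - this
    have e1 := e z hz
    have e2 := e z₁ h1
    have n1 := S1_mul_conj z
    have n2 := S1_mul_conj z₁
    have hne : (z : ℂ) - z₁ ≠ 0 := fun hh => hzz (Subtype.ext (sub_eq_zero.1 hh))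
    apply Subtype.ext
    show (z : ℂ) = -cB h / (conj (cB h) * z₁)
    rw [eq_div_iff (mul_ne_zero hB' (S1_ne _))]
    apply mul_left_cancel₀ hne
    linear_combination (-(z : ℂ) * z₁) * e1 + (z : ℂ) * z₁ * e2 + cB h * z₁ * n1 - cB h * z * n2

theorem solvable_stab (K : Subgroup SL2) (z : S1) (hK : ∀ g ∈ K, mob g z = z) : Group.IsSolvable K := by
  have hreal : ∀ g ∈ K, ((jj g z * conj (z : ℂ)).re : ℂ) = jj g z * conj (z : ℂ) := by
    intro g hg
    have h1 : ((mob g z : S1) : ℂ) = z := by rw [hK g hg]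
    rw [coe_mob, div_eq_iff (mul_ne_zero (S1_ne _) (cj_ne _ _))] at h1
    have := S1_mul_conj z
    apply Complex.conj_eq_iff_re.1
    rw [map_mul, Complex.conj_conj]
    linear_combination (-conj (z : ℂ)) * h1 - z * conj (jj g z) * this
  let χ : K →* ℝ :=
    { toFun := fun g => (jj g.1 z * conj (z : ℂ)).re
      map_one' := by
        show (jj 1 z * conj (z : ℂ)).re = 1
        rw [jj_one, S1_mul_conj]; simp
      map_mul' := by
        rintro ⟨g, hg⟩ ⟨h, hh⟩
        show (jj (g * h) z * conj (z : ℂ)).re = (jj g z * conj (z : ℂ)).re * (jj h z * conj (z : ℂ)).re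
        apply Complex.ofReal_injective
        rw [hreal _ (mul_mem hg hh), Complex.ofReal_mul, hreal g hg, hreal h hh, jj_mul, hK h hh]
        have h2 := congrArg conj (hreal h hh)
        rw [Complex.conj_ofReal, hreal h hh, map_mul, Complex.conj_conj] at h2
        linear_combination (-(jj g z * conj (z : ℂ))) * h2 }
  have hker : ∀ x ∈ χ.toHomUnits.ker, cA x.1 = 1 - cB x.1 * conj (z : ℂ) ∧
      (cB x.1 * conj (z : ℂ)).re = 0 := by
    rintro ⟨g, hg⟩ hx
    have h1 : χ ⟨g, hg⟩ = 1 := by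
      have := congrArg Units.val (MonoidHom.mem_ker.1 hx)
      simpa using this
    have h2 : jj g z * conj (z : ℂ) = 1 := by
      rw [← hreal g hg]
      have : (jj g z * conj (z : ℂ)).re = 1 := h1
      rw [this]; simp
    have h3 : cA g = 1 - cB g * conj (z : ℂ) := by
      unfold jj at h2
      linear_combination h2 - cA g * S1_mul_conj z
    refine ⟨h3, ?_⟩
    have h4 := normSq_sub g
    have h5 : Complex.normSq (cB g * conj (z : ℂ)) = Complex.normSq (cB g) := by
      rw [map_mul, Complex.normSq_conj, Complex.normSq_eq_norm_sq (z : ℂ), S1_norm]; simp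
    rw [h3, ← h5] at h4
    simp only [Complex.normSq_apply, Complex.sub_re, Complex.sub_im, Complex.one_re,
      Complex.one_im] at h4
    show (cB g * conj (z : ℂ)).re = 0
    linarith
  have : Group.IsSolvable χ.toHomUnits.ker := by
    apply Group.isSolvable_of_comm
    intro x y
    obtain ⟨a1, a2⟩ := hker x.1 x.2
    obtain ⟨b1, b2⟩ := hker y.1 y.2
    have c1 : conj (cB x.1.1) * z = - (cB x.1.1 * conj (z : ℂ)) := by
      have : conj (cB x.1.1 * conj (z : ℂ)) = - (cB x.1.1 * conj (z : ℂ)) := by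
        apply Complex.ext <;> simp only [Complex.conj_re, Complex.conj_im, Complex.neg_re,
          Complex.neg_im]
        rw [a2]; simp
      rwa [map_mul, Complex.conj_conj] at this
    have c2 : conj (cB y.1.1) * z = - (cB y.1.1 * conj (z : ℂ)) := by
      have : conj (cB y.1.1 * conj (z : ℂ)) = - (cB y.1.1 * conj (z : ℂ)) := by
        apply Complex.ext <;> simp only [Complex.conj_re, Complex.conj_im, Complex.neg_re,
          Complex.neg_im]
        rw [b2]; simp
      rwa [map_mul, Complex.conj_conj] at this
    have n1 := S1_mul_conj z
    apply Subtype.ext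
    apply Subtype.ext
    show x.1.1 * y.1.1 = y.1.1 * x.1.1
    generalize x.1.1 = g at *
    generalize y.1.1 = h at *
    apply sl2_ext
    · rw [cA_mul, cA_mul, a1, b1]
      linear_combination (cB g * conj (z : ℂ)) * c2 - (cB h * conj (z : ℂ)) * c1 + (cB h * conj (cB g) - cB g * conj (cB h)) * n1
    · rw [cB_mul, cB_mul, a1, b1]
      simp only [map_sub, map_one, map_mul, Complex.conj_conj]
      linear_combination (-cB g) * c2 + cB h * c1
  exact Group.isSolvable_of_ker_le_range χ.toHomUnits.ker.subtype χ.toHomUnits (by simp)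

theorem solvable_pair (H : Subgroup SL2) (z₁ z₂ : S1)
    (h1 : ∀ g ∈ H, mob g z₁ = z₁ ∨ mob g z₁ = z₂) (h2 : ∀ g ∈ H, mob g z₂ = z₁ ∨ mob g z₂ = z₂) :
    Group.IsSolvable H := by
  classical
  by_cases hz : z₁ = z₂
  · subst hz
    exact solvable_stab H z₁ (fun g hg => by simpa using h1 g hg)
  have hsw : ∀ g ∈ H, mob g z₁ ≠ z₁ → mob g z₂ = z₁ := by
    intro g hg hne
    have e1 := (h1 g hg).resolve_left hne
    rcases h2 g hg with e | e
    · exact e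
    · exact absurd (mob_injective g (e1.trans e.symm)) hz
  let χ : H →* ℤˣ :=
    { toFun := fun g => if mob g.1 z₁ = z₁ then 1 else -1
      map_one' := by simp [mob_one]
      map_mul' := by
        rintro ⟨g, hg⟩ ⟨h, hh⟩
        show (if mob (g * h) z₁ = z₁ then (1 : ℤˣ) else -1) =
          (if mob g z₁ = z₁ then 1 else -1) * (if mob h z₁ = z₁ then 1 else -1)
        rw [mob_mul]
        by_cases e2 : mob h z₁ = z₁
        · simp [e2]
        · have e3 := (h1 h hh).resolve_left e2
          by_cases e1 : mob g z₁ = z₁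
          · have : mob g z₂ ≠ z₁ := fun e => hz (mob_injective g (e1.trans e.symm))
            rw [e3]; simp [e1, this, Ne.symm hz]
          · rw [e3, hsw g hg e1]; simp [e1, Ne.symm hz] }
  let K : Subgroup SL2 := χ.ker.map H.subtype
  have hKs : Group.IsSolvable K := by
    apply solvable_stab K z₁
    rintro _ ⟨⟨g, hg⟩, hx, rfl⟩
    have : (if mob g z₁ = z₁ then (1 : ℤˣ) else -1) = 1 := hx
    by_contra hne
    have hne' : mob g z₁ ≠ z₁ := hne
    rw [if_neg hne'] at this
    exact absurd this (by decide)
  have : Group.IsSolvable χ.ker := by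
    have f := χ.ker.equivMapOfInjective H.subtype H.subtype_injective
    exact Group.isSolvable_of_isSolvable_injective (f := f.toMonoidHom) f.injective
  exact Group.isSolvable_of_ker_le_range χ.ker.subtype χ (by simp)


theorem supp_subset (μ : Measure SL2) (F : Set SL2) (hF : IsClosed F) (h : ∀ᵐ g ∂μ, g ∈ F) :
    measSupp μ ⊆ F := by
  intro g hg
  by_contra hn
  have := hg Fᶜ hF.isOpen_compl hn
  exact this.ne' h

theorem exists_nonelliptic_mem (H : Subgroup SL2) (hH : ¬ Group.IsSolvable H) :
    ∃ h ∈ H, 1 ≤ (cA h).re^2 ∧ cB h ≠ 0 := by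
  by_contra hn
  apply hH
  apply Group.isSolvable_of_comm
  rintro ⟨a, ha⟩ ⟨b, hb⟩
  by_contra hab
  have hab' : a * b ≠ b * a := fun e => hab (Subtype.ext e)
  obtain ⟨h, hh, h2⟩ := exists_nonelliptic a b hab'
  refine hn ⟨h, ?_, h2⟩
  have : Subgroup.closure {a, b} ≤ H := by
    rw [Subgroup.closure_le]
    rintro x (rfl | rfl)
    · exact ha
    · exact hb
  exact this hh

theorem no_finite_invariant (H : Subgroup SL2) (hH : ¬ Group.IsSolvable H) (A : Finset S1)
    (hA : A.Nonempty) (hinv : ∀ g ∈ H, ∀ z ∈ A, mob g z ∈ A) : False := by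
  obtain ⟨h, hh, h1, h2⟩ := exists_nonelliptic_mem H hH
  have hD := DD_finset h h1 A (hinv h hh)
  obtain ⟨z₁, hz₁⟩ := hA
  obtain ⟨z₂, hz₂⟩ := DD_zero_pair h h2 z₁ (hD z₁ hz₁)
  have key : ∀ z ∈ A, z = z₁ ∨ z = z₂ := fun z hz => hz₂ z (hD z hz)
  by_cases hm : z₂ ∈ A
  · exact hH (solvable_pair H z₁ z₂ (fun g hg => key _ (hinv g hg _ hz₁))
      (fun g hg => key _ (hinv g hg _ hm)))
  · have key2 : ∀ z ∈ A, z = z₁ := by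
      intro z hz
      rcases key z hz with e | e
      · exact e
      · exact absurd (e ▸ hz) hm
    exact hH (solvable_stab H z₁ (fun g hg => key2 _ (hinv g hg _ hz₁)))

theorem measurable_mob : Measurable (fun p : SL2 × S1 => mob p.1 p.2) := continuous_mob.measurable

theorem stat_singleton (μ : Measure SL2) [IsProbabilityMeasure μ] (ν : Measure S1)
    [IsProbabilityMeasure ν] (hν : (μ.prod ν).map (fun p => mob p.1 p.2) = ν) (z : S1) :
    ν {z} = ∫⁻ g, ν {mob g⁻¹ z} ∂μ := by
  conv_lhs => rw [← hν]
  rw [Measure.map_apply measurable_mob (measurableSet_singleton z),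
    Measure.prod_apply (measurable_mob (measurableSet_singleton z))]
  congr 1
  ext g
  congr 1
  ext w
  simp only [Set.mem_preimage, Set.mem_singleton_iff]
  constructor
  · rintro rfl
    rw [mob_inv_mob]
  · rintro rfl
    rw [mob_mob_inv]

theorem finite_atoms (ν : Measure S1) [IsProbabilityMeasure ν] (m : ENNReal) (hm : 0 < m) :
    {z : S1 | m ≤ ν {z}}.Finite := by
  apply Measure.finite_const_le_meas_of_disjoint_iUnion ν hm (As := fun z : S1 => {z})
  · intro z; exact measurableSet_singleton z
  · intro a b hab
    simpa using hab
  · exact measure_ne_top _ _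

theorem exists_max_atom (ν : Measure S1) [IsProbabilityMeasure ν] (z0 : S1) (h0 : ν {z0} ≠ 0) :
    ∃ z1 : S1, 0 < ν {z1} ∧ ∀ z, ν {z} ≤ ν {z1} := by
  have hf := finite_atoms ν (ν {z0}) (pos_iff_ne_zero.2 h0)
  obtain ⟨z1, hz1, hmax⟩ := Set.exists_max_image _ (fun z => ν {z}) hf ⟨z0, le_refl (ν {z0})⟩
  refine ⟨z1, lt_of_lt_of_le (pos_iff_ne_zero.2 h0) hz1, fun z => ?_⟩
  by_cases hz : ν {z0} ≤ ν {z}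
  · exact hmax z hz
  · exact (not_le.1 hz).le.trans hz1

theorem measurable_atom (μ : Measure SL2) [IsProbabilityMeasure μ] (ν : Measure S1)
    [IsProbabilityMeasure ν] (z : S1) : Measurable (fun g : SL2 => ν {mob g⁻¹ z}) := by
  have := measurable_measure_prodMk_left (ν := ν) (measurable_mob (measurableSet_singleton z))
  convert this using 2 with g
  congr 1
  ext w
  simp only [Set.mem_preimage, Set.mem_singleton_iff]
  constructor
  · rintro rfl
    rw [mob_mob_inv]
  · rintro rfl
    rw [mob_inv_mob]

theorem continuous_mob_inv (z : S1) : Continuous (fun g : SL2 => mob g⁻¹ z) := by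
  have h : Continuous (fun g : SL2 => ((g⁻¹, z) : SL2 × S1)) := by fun_prop
  have := continuous_mob.comp h
  exact this

theorem stat_noatom (μ : Measure SL2) [IsProbabilityMeasure μ] (ν : Measure S1)
    [IsProbabilityMeasure ν] (hν : (μ.prod ν).map (fun p => mob p.1 p.2) = ν)
    (hH : ¬ Group.IsSolvable (Subgroup.closure (measSupp μ))) (z0 : S1) : ν {z0} = 0 := by
  by_contra h0
  obtain ⟨z1, hpos, hmax⟩ := exists_max_atom ν z0 h0
  have hfin := finite_atoms ν (ν {z1}) hpos
  set A := hfin.toFinset with hAdef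
  have hmem : ∀ z, z ∈ A ↔ ν {z1} ≤ ν {z} := fun z => by simp [hAdef]
  have hae : ∀ᵐ g ∂μ, ∀ z ∈ A, mob g⁻¹ z ∈ A := by
    rw [Filter.eventually_all_finset]
    intro z hz
    have hzm : ν {z} = ν {z1} := le_antisymm (hmax z) ((hmem z).1 hz)
    have hst := stat_singleton μ ν hν z
    rw [hzm] at hst
    have h1 : ∫⁻ g, ν {mob g⁻¹ z} ∂μ = ∫⁻ g, ν {z1} ∂μ := by rw [← hst]; simp
    have h2 := ae_eq_of_ae_le_of_lintegral_le (μ := μ) (f := fun g => ν {mob g⁻¹ z})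
      (g := fun _ => ν {z1}) (Filter.Eventually.of_forall fun g => hmax _)
      (by rw [← hst]; exact measure_ne_top _ _) aemeasurable_const h1.symm.le
    filter_upwards [h2] with g hg
    rw [hmem]
    exact hg.symm.le
  have hcl : IsClosed {g : SL2 | ∀ z ∈ A, mob g⁻¹ z ∈ A} := by
    simp only [Set.setOf_forall]
    refine isClosed_iInter fun z => isClosed_iInter fun hz => ?_
    have : IsClosed (A : Set S1) := A.finite_toSet.isClosed
    exact this.preimage (continuous_mob_inv z)
  have hsup := supp_subset μ _ hcl hae
  have hinv : ∀ g ∈ Subgroup.closure (measSupp μ), ∀ z ∈ A, mob g⁻¹ z ∈ A := by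
    intro g hg
    induction hg using Subgroup.closure_induction with
    | mem x hx => exact hsup hx
    | one => intro z hz; rwa [inv_one, mob_one]
    | mul x y _ _ hx hy =>
      intro z hz
      rw [mul_inv_rev, mob_mul]
      exact hy _ (hx z hz)
    | inv x _ hx =>
      intro z hz
      have hs := Finset.surjOn_of_injOn_of_card_le (s := A) (t := A) (mob x⁻¹) hx
        (mob_injective x⁻¹).injOn le_rfl
      obtain ⟨w, hw, e⟩ := hs hz
      rw [← e, mob_inv_mob]
      exact hw
  refine no_finite_invariant _ hH A ⟨z1, (hmem z1).2 le_rfl⟩ ?_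
  intro g hg z hz
  have := hinv g⁻¹ (inv_mem hg) z hz
  rwa [inv_inv] at this


theorem no_invariant (H : Subgroup SL2) (hH : ¬ Group.IsSolvable H) (ν : Measure S1)
    [IsProbabilityMeasure ν] (hna : ∀ z, ν {z} = 0) (hinv : ∀ g ∈ H, ν.map (mob g) = ν) :
    False := by
  obtain ⟨h, hh, h1, h2⟩ := exists_nonelliptic_mem H hH
  have hae := DD_ae h h1 ν (hinv h hh)
  obtain ⟨z₁, hz₁⟩ := hae.exists
  obtain ⟨z₂, hz₂⟩ := DD_zero_pair h h2 z₁ hz₁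
  have hae2 : ∀ᵐ z ∂ν, z ∈ ({z₁} ∪ {z₂} : Set S1) := by
    filter_upwards [hae] with z hz
    exact hz₂ z hz
  have h4 : ν ({z₁} ∪ {z₂} : Set S1) = 0 := by
    apply measure_union_null <;> exact hna _
  have h5 : ∀ᵐ z ∂ν, z ∉ ({z₁} ∪ {z₂} : Set S1) := measure_eq_zero_iff_ae_notMem.1 h4
  obtain ⟨z, a, b⟩ := (hae2.and h5).exists
  exact b a

theorem norm_sq_one_sub (z w : S1) (r : ℝ) :
    ‖1 - (r : ℂ) * ((z : ℂ) * conj (w : ℂ))‖^2 = (1 - r)^2 + r * ‖(z : ℂ) - w‖^2 := by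
  have hz := S1_norm z
  have hw := S1_norm w
  have hz' : Complex.normSq z = 1 := by rw [Complex.normSq_eq_norm_sq, hz]; norm_num
  have hw' : Complex.normSq w = 1 := by rw [Complex.normSq_eq_norm_sq, hw]; norm_num
  rw [← Complex.normSq_eq_norm_sq, ← Complex.normSq_eq_norm_sq]
  rw [Complex.normSq_apply] at *
  simp only [Complex.sub_re, Complex.sub_im, Complex.mul_re, Complex.mul_im, Complex.ofReal_re,
    Complex.ofReal_im, Complex.conj_re, Complex.conj_im, Complex.one_re, Complex.one_im] at *
  rw [Complex.normSq_apply] at *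
  simp only [Complex.sub_re, Complex.sub_im] at *
  generalize (z : ℂ).re = a at *
  generalize (z : ℂ).im = b at *
  generalize (w : ℂ).re = c at *
  generalize (w : ℂ).im = d at *
  linear_combination (r^2 * (c*c+d*d) - r) * hz' + (r^2 - r) * hw'

/-- The truncated logarithmic kernel. -/
def KK (r : ℝ) (z w : S1) : ℝ := -Real.log ‖1 - (r : ℂ) * ((z : ℂ) * conj (w : ℂ))‖

theorem norm_zw (z w : S1) : ‖(z : ℂ) * conj (w : ℂ)‖ = 1 := by
  rw [norm_mul, RCLike.norm_conj, S1_norm, S1_norm, mul_one]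

theorem KK_hasSum (r : ℝ) (h0 : 0 ≤ r) (h1 : r < 1) (z w : S1) :
    HasSum (fun k : ℕ => r^k / k * (((z : ℂ) * conj (w : ℂ))^k).re) (KK r z w) := by
  have hn : ‖(r : ℂ) * ((z : ℂ) * conj (w : ℂ))‖ < 1 := by
    rw [norm_mul, norm_zw, mul_one, Complex.norm_real, Real.norm_of_nonneg h0]; exact h1
  have := Complex.hasSum_re (Complex.hasSum_taylorSeries_neg_log hn)
  convert this using 1
  · ext k
    have : ((r : ℂ) * ((z : ℂ) * conj (w : ℂ)))^k / (k : ℂ) =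
      ((r^k / k : ℝ) : ℂ) * ((z : ℂ) * conj (w : ℂ))^k := by
      rw [mul_pow (r : ℂ)]; push_cast; ring
    rw [this, Complex.re_ofReal_mul]
  · rw [KK, Complex.neg_re, Complex.log_re]

theorem KK_bound (r : ℝ) (h0 : 0 ≤ r) (h1 : r < 1) (g : SL2) (z w : S1) :
    |KK r (mob g z) (mob g w) - KK r z w| ≤ 2 * Real.log (nrm g) := by
  have hN := one_le_nrm g
  set N := nrm g with hNdef
  have hN0 : 0 < N := by linarith
  have hd := mob_dist g z w
  have hp0 := jj_pos g z
  have hq0 := jj_pos g w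
  have hp1 := jj_le g z
  have hq1 := jj_le g w
  have hp2 := le_jj g z
  have hq2 := le_jj g w
  set p := ‖jj g z‖
  set q := ‖jj g w‖
  have e1 := norm_sq_one_sub z w r
  have e2 := norm_sq_one_sub (mob g z) (mob g w) r
  set X := ‖1 - (r : ℂ) * ((z : ℂ) * conj (w : ℂ))‖ with hX
  set Y := ‖1 - (r : ℂ) * ((mob g z : ℂ) * conj (mob g w : ℂ))‖ with hY
  set s := ‖(z : ℂ) - w‖
  set s' := ‖(mob g z : ℂ) - mob g w‖
  have hs : 0 ≤ s := norm_nonneg _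
  have hs' : 0 ≤ s' := norm_nonneg _
  have hXn : 0 ≤ X := norm_nonneg _
  have hYn : 0 ≤ Y := norm_nonneg _
  have hr : 0 < (1 - r)^2 := by have : 0 < 1 - r := by linarith
                                positivity
  have hX0 : 0 < X := by
    rcases hXn.lt_or_eq with h | h
    · exact h
    · rw [← h] at e1; nlinarith [mul_nonneg h0 (sq_nonneg s)]
  have hY0 : 0 < Y := by
    rcases hYn.lt_or_eq with h | h
    · exact h
    · rw [← h] at e2; nlinarith [mul_nonneg h0 (sq_nonneg s')]
  have hpq1 : p * q ≤ N^2 := by nlinarith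
  have hpq2 : 1 ≤ N^2 * (p * q) := by
    have a1 : 1 ≤ N * p := by rwa [inv_le_iff_one_le_mul₀' hN0] at hp2
    have a2 : 1 ≤ N * q := by rwa [inv_le_iff_one_le_mul₀' hN0] at hq2
    nlinarith
  have hN2 : 1 ≤ N^2 := by nlinarith
  have hs1 : s ≤ N^2 * s' := by rw [← hd]; nlinarith
  have hs2 : s' ≤ N^2 * s := by rw [← hd]; nlinarith
  have hs1' : s^2 ≤ (N^2)^2 * s'^2 := by rw [← mul_pow]; gcongr
  have hs2' : s'^2 ≤ (N^2)^2 * s^2 := by rw [← mul_pow]; gcongr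
  have hN4 : 1 ≤ (N^2)^2 := by nlinarith
  have hXY : X ≤ N^2 * Y := by
    apply le_of_sq_le_sq _ (by positivity)
    rw [mul_pow, e1, e2]
    nlinarith [mul_le_mul_of_nonneg_left hs1' h0]
  have hYX : Y ≤ N^2 * X := by
    apply le_of_sq_le_sq _ (by positivity)
    rw [mul_pow, e1, e2]
    nlinarith [mul_le_mul_of_nonneg_left hs2' h0]
  have l1 := Real.log_le_log hX0 hXY
  have l2 := Real.log_le_log hY0 hYX
  rw [Real.log_mul (by positivity) (by positivity), Real.log_pow] at l1 l2
  have u1 : KK r (mob g z) (mob g w) = - Real.log Y := rfl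
  have u2 : KK r z w = - Real.log X := rfl
  rw [u1, u2, abs_le]
  push_cast at *
  constructor <;> linarith

theorem KK_tendsto (g : SL2) (z w : S1) (hzw : z ≠ w) :
    Tendsto (fun r => KK r (mob g z) (mob g w) - KK r z w) (nhdsWithin 1 (Set.Iio 1))
      (nhds (Real.log ‖jj g z‖ + Real.log ‖jj g w‖)) := by
  have key : ∀ a b : S1, a ≠ b → Tendsto (fun r => KK r a b) (nhdsWithin 1 (Set.Iio 1))
      (nhds (-Real.log ‖(a : ℂ) - b‖)) := by
    intro a b hab
    have h0 : ‖(a : ℂ) - b‖ ≠ 0 := by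
      rw [norm_ne_zero_iff, sub_ne_zero]; exact fun e => hab (Subtype.ext e)
    have h1 : ‖1 - ((1 : ℝ) : ℂ) * ((a : ℂ) * conj (b : ℂ))‖ = ‖(a : ℂ) - b‖ := by
      have := norm_sq_one_sub a b 1
      rw [sub_self, zero_pow two_ne_zero, zero_add, one_mul] at this
      exact (sq_eq_sq₀ (norm_nonneg _) (norm_nonneg _)).1 this
    have hc : ContinuousAt (fun r : ℝ => -Real.log ‖1 - (r : ℂ) * ((a : ℂ) * conj (b : ℂ))‖) 1 := by
      apply ContinuousAt.neg
      apply ContinuousAt.log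
      · fun_prop
      · rw [h1]; exact h0
    have := hc.tendsto
    rw [h1] at this
    exact this.mono_left nhdsWithin_le_nhds
  have hg : mob g z ≠ mob g w := fun e => hzw (mob_injective g e)
  have := (key _ _ hg).sub (key _ _ hzw)
  convert this using 2
  have hd := mob_dist g z w
  have hp0 := jj_pos g z
  have hq0 := jj_pos g w
  have h0 : ‖(mob g z : ℂ) - mob g w‖ ≠ 0 := by
    rw [norm_ne_zero_iff, sub_ne_zero]; exact fun e => hg (Subtype.ext e)
  rw [← hd, Real.log_mul h0 (by positivity), Real.log_mul (by positivity) (by positivity)]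
  ring


attribute [local irreducible] mob

/-- Fourier coefficients of the translated measure. -/
def GG (ν : Measure S1) (k : ℕ) (g : SL2) : ℂ := ∫ z, (mob g z : ℂ)^k ∂ν

theorem norm_pow_S1 (z : S1) (k : ℕ) : ‖(z : ℂ)^k‖ = 1 := by
  rw [norm_pow, S1_norm, one_pow]

theorem continuous_mob_fst (z : S1) : Continuous (fun g : SL2 => mob g z) := by
  have h : Continuous (fun g : SL2 => ((g, z) : SL2 × S1)) := by fun_prop
  have := continuous_mob.comp h
  exact this

theorem continuous_GG (ν : Measure S1) [IsProbabilityMeasure ν] (k : ℕ) :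
    Continuous (GG ν k) := by
  apply continuous_of_dominated (bound := fun _ => (1 : ℝ))
  · intro g
    have h := continuous_mob_left g
    have h2 : Continuous (fun z => (mob g z : ℂ)^k) := by fun_prop
    exact h2.aestronglyMeasurable
  · intro g
    exact Filter.Eventually.of_forall fun z => (norm_pow_S1 _ k).le
  · exact integrable_const _
  · refine Filter.Eventually.of_forall fun z => ?_
    have h := continuous_mob_fst z
    fun_prop

theorem GG_norm_le (ν : Measure S1) [IsProbabilityMeasure ν] (k : ℕ) (g : SL2) :
    ‖GG ν k g‖ ≤ 1 := by
  have := norm_integral_le_of_norm_le_const (μ := ν) (f := fun z => (mob g z : ℂ)^k) (C := 1)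
    (Filter.Eventually.of_forall fun z => (norm_pow_S1 _ k).le)
  simpa [GG] using this

theorem GG_mean (μ : Measure SL2) [IsProbabilityMeasure μ] (ν : Measure S1)
    [IsProbabilityMeasure ν] (hν : (μ.prod ν).map (fun p => mob p.1 p.2) = ν) (k : ℕ) :
    ∫ g, GG ν k g ∂μ = GG ν k 1 := by
  have h1 : Continuous (fun p : SL2 × S1 => (mob p.1 p.2 : ℂ)^k) := by
    have := continuous_mob
    fun_prop
  have h2 : Integrable (fun p : SL2 × S1 => (mob p.1 p.2 : ℂ)^k) (μ.prod ν) :=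
    Integrable.of_bound h1.aestronglyMeasurable 1
      (Filter.Eventually.of_forall fun p => (norm_pow_S1 _ k).le)
  have h3 : GG ν k 1 = ∫ z, (z : ℂ)^k ∂ν := by simp only [GG, mob_one]
  have hc : Continuous (fun z : S1 => (z : ℂ)^k) := by fun_prop
  rw [h3]
  conv_rhs => rw [← hν]
  rw [integral_map measurable_mob.aemeasurable hc.aestronglyMeasurable, integral_prod _ h2]
  rfl

theorem GG_var (μ : Measure SL2) [IsProbabilityMeasure μ] (ν : Measure S1)
    [IsProbabilityMeasure ν] (hν : (μ.prod ν).map (fun p => mob p.1 p.2) = ν) (k : ℕ) :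
    ∫ g, ‖GG ν k g - GG ν k 1‖^2 ∂μ = ∫ g, ‖GG ν k g‖^2 ∂μ - ‖GG ν k 1‖^2 := by
  set c := GG ν k 1 with hc
  have hcont := continuous_GG ν k
  have i1 : Integrable (GG ν k) μ := Integrable.of_bound hcont.aestronglyMeasurable 1
    (Filter.Eventually.of_forall fun g => GG_norm_le ν k g)
  have i2 : Integrable (fun g => ‖GG ν k g‖^2) μ := by
    refine Integrable.of_bound (by fun_prop) 1 (Filter.Eventually.of_forall fun g => ?_)
    rw [Real.norm_of_nonneg (by positivity)]
    exact pow_le_one₀ (norm_nonneg _) (GG_norm_le ν k g)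
  have i3 : Integrable (fun g => GG ν k g * conj c) μ := i1.mul_const _
  have e : ∀ g, ‖GG ν k g - c‖^2 = ‖GG ν k g‖^2 - 2 * (GG ν k g * conj c).re + ‖c‖^2 := by
    intro g
    rw [← Complex.normSq_eq_norm_sq, ← Complex.normSq_eq_norm_sq, ← Complex.normSq_eq_norm_sq,
      Complex.normSq_sub]
    ring
  have i4 : Integrable (fun g => 2 * (GG ν k g * conj c).re) μ := (i3.re).const_mul 2
  have e5 : ∫ g, (GG ν k g * conj c).re ∂μ = ‖c‖^2 := by
    have : ∫ g, (GG ν k g * conj c).re ∂μ = (∫ g, GG ν k g * conj c ∂μ).re := integral_re i3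
    rw [this, integral_mul_const, GG_mean μ ν hν k, Complex.mul_conj, Complex.ofReal_re,
      Complex.normSq_eq_norm_sq]
  simp_rw [e]
  rw [integral_add (f := fun g => ‖GG ν k g‖^2 - 2 * (GG ν k g * conj c).re) (i2.sub i4)
    (integrable_const _), integral_sub i2 i4, integral_const_mul, e5]
  simp
  ring

theorem GG_sq (ν : Measure S1) [IsProbabilityMeasure ν] (k : ℕ) (g : SL2) :
    ∫ p, (((mob g p.1 : ℂ) * conj (mob g p.2 : ℂ))^k).re ∂(ν.prod ν) = ‖GG ν k g‖^2 := by
  have hm := continuous_mob_left g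
  have h1 : Continuous (fun p : S1 × S1 => ((mob g p.1 : ℂ) * conj (mob g p.2 : ℂ))^k) := by
    fun_prop
  have i : Integrable (fun p : S1 × S1 => ((mob g p.1 : ℂ) * conj (mob g p.2 : ℂ))^k)
      (ν.prod ν) := Integrable.of_bound h1.aestronglyMeasurable 1
    (Filter.Eventually.of_forall fun p => by rw [norm_pow, norm_zw, one_pow])
  have e : ∫ p, (((mob g p.1 : ℂ) * conj (mob g p.2 : ℂ))^k).re ∂(ν.prod ν) =
    (∫ p, ((mob g p.1 : ℂ) * conj (mob g p.2 : ℂ))^k ∂(ν.prod ν)).re := integral_re i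
  have e2 : ∫ p, ((mob g p.1 : ℂ) * conj (mob g p.2 : ℂ))^k ∂(ν.prod ν) =
      (∫ z, (mob g z : ℂ)^k ∂ν) * ∫ z, conj ((mob g z : ℂ)^k) ∂ν := by
    rw [← integral_prod_mul]
    simp only [mul_pow, map_pow]
  rw [e, e2, integral_conj]
  change (GG ν k g * conj (GG ν k g)).re = _
  rw [Complex.mul_conj, Complex.ofReal_re, Complex.normSq_eq_norm_sq]

/-- The terms of the series for the kernel difference. -/
def fk (r : ℝ) (k : ℕ) (q : SL2 × S1 × S1) : ℝ :=
  r^k / k * (((mob q.1 q.2.1 : ℂ) * conj (mob q.1 q.2.2 : ℂ))^k).re -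
  r^k / k * (((q.2.1 : ℂ) * conj (q.2.2 : ℂ))^k).re

theorem cont_m1 : Continuous (fun q : SL2 × S1 × S1 => mob q.1 q.2.1) := by
  have h : Continuous (fun q : SL2 × S1 × S1 => ((q.1, q.2.1) : SL2 × S1)) := by fun_prop
  have := continuous_mob.comp h
  exact this

theorem cont_m2 : Continuous (fun q : SL2 × S1 × S1 => mob q.1 q.2.2) := by
  have h : Continuous (fun q : SL2 × S1 × S1 => ((q.1, q.2.2) : SL2 × S1)) := by fun_prop
  have := continuous_mob.comp h
  exact this

theorem re_pow_le (z w : S1) (k : ℕ) : |(((z : ℂ) * conj (w : ℂ))^k).re| ≤ 1 := by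
  refine (Complex.abs_re_le_norm _).trans ?_
  rw [norm_pow, norm_zw, one_pow]

theorem continuous_fk (r : ℝ) (k : ℕ) : Continuous (fk r k) := by
  have h1 := cont_m1
  have h2 := cont_m2
  unfold fk
  fun_prop

theorem coef_le (r : ℝ) (h0 : 0 ≤ r) (k : ℕ) : r^k / k ≤ r^k := by
  rcases Nat.eq_zero_or_pos k with h | h
  · subst h; simp
  · apply div_le_self (by positivity)
    exact_mod_cast h

theorem fk_bound (r : ℝ) (h0 : 0 ≤ r) (k : ℕ) (q : SL2 × S1 × S1) : ‖fk r k q‖ ≤ 2 * r^k := by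
  have a1 := abs_le.1 (re_pow_le (mob q.1 q.2.1) (mob q.1 q.2.2) k)
  have a2 := abs_le.1 (re_pow_le q.2.1 q.2.2 k)
  have c := coef_le r h0 k
  have c0 : 0 ≤ r^k / k := by positivity
  rw [Real.norm_eq_abs, fk, ← mul_sub, abs_mul, abs_of_nonneg c0, mul_comm]
  refine mul_le_mul ?_ c c0 (by norm_num)
  rw [abs_le]; constructor <;> linarith [a1.1, a1.2, a2.1, a2.2]

theorem fk_integrable (μ : Measure SL2) [IsProbabilityMeasure μ] (ν : Measure S1)
    [IsProbabilityMeasure ν] (r : ℝ) (h0 : 0 ≤ r) (k : ℕ) :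
    Integrable (fk r k) (μ.prod (ν.prod ν)) :=
  Integrable.of_bound (continuous_fk r k).aestronglyMeasurable (2 * r^k)
    (Filter.Eventually.of_forall fun q => fk_bound r h0 k q)

theorem fk_integral (μ : Measure SL2) [IsProbabilityMeasure μ] (ν : Measure S1)
    [IsProbabilityMeasure ν] (hν : (μ.prod ν).map (fun p => mob p.1 p.2) = ν)
    (r : ℝ) (h0 : 0 ≤ r) (k : ℕ) :
    ∫ q, fk r k q ∂(μ.prod (ν.prod ν)) = r^k / k * ∫ g, ‖GG ν k g - GG ν k 1‖^2 ∂μ := by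
  rw [integral_prod _ (fk_integrable μ ν r h0 k), GG_var μ ν hν]
  have hb : ∀ g : SL2, Integrable
      (fun p : S1 × S1 => r^k / k * (((mob g p.1 : ℂ) * conj (mob g p.2 : ℂ))^k).re)
      (ν.prod ν) := by
    intro g
    have hm := continuous_mob_left g
    refine Integrable.const_mul (Integrable.of_bound (C := 1) ?_ ?_) _
    · have : Continuous (fun p : S1 × S1 => (((mob g p.1 : ℂ) * conj (mob g p.2 : ℂ))^k).re) := by
        fun_prop
      exact this.aestronglyMeasurable
    · exact Filter.Eventually.of_forall fun p => re_pow_le _ _ k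
  have e : ∀ g : SL2, ∫ p, fk r k (g, p) ∂(ν.prod ν) =
      r^k / k * ‖GG ν k g‖^2 - r^k / k * ‖GG ν k 1‖^2 := by
    intro g
    have h1 := hb 1
    simp only [mob_one] at h1
    have h2 := GG_sq ν k 1
    simp only [mob_one] at h2
    unfold fk
    rw [integral_sub (hb g) h1, integral_const_mul, integral_const_mul, GG_sq, h2]
  simp_rw [e]
  have hcont := continuous_GG ν k
  have i2 : Integrable (fun g => ‖GG ν k g‖^2) μ := by
    refine Integrable.of_bound (by fun_prop) 1 (Filter.Eventually.of_forall fun g => ?_)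
    rw [Real.norm_of_nonneg (by positivity)]
    exact pow_le_one₀ (norm_nonneg _) (GG_norm_le ν k g)
  rw [integral_sub (i2.const_mul _) (integrable_const _), integral_const_mul]
  simp
  ring

theorem fk_hasSum (r : ℝ) (h0 : 0 ≤ r) (h1 : r < 1) (q : SL2 × S1 × S1) :
    HasSum (fun k => fk r k q)
      (KK r (mob q.1 q.2.1) (mob q.1 q.2.2) - KK r q.2.1 q.2.2) :=
  (KK_hasSum r h0 h1 _ _).sub (KK_hasSum r h0 h1 _ _)

theorem energy_ge (μ : Measure SL2) [IsProbabilityMeasure μ] (ν : Measure S1)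
    [IsProbabilityMeasure ν] (hν : (μ.prod ν).map (fun p => mob p.1 p.2) = ν)
    (r : ℝ) (h0 : 0 ≤ r) (h1 : r < 1) (k : ℕ) :
    r^k / k * ∫ g, ‖GG ν k g - GG ν k 1‖^2 ∂μ ≤
      ∫ q, (KK r (mob q.1 q.2.1) (mob q.1 q.2.2) - KK r q.2.1 q.2.2) ∂(μ.prod (ν.prod ν)) := by
  have hs : Summable fun k => ∫ q, ‖fk r k q‖ ∂(μ.prod (ν.prod ν)) := by
    refine Summable.of_nonneg_of_le (fun k => integral_nonneg fun q => norm_nonneg _) (fun k => ?_)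
      ((summable_geometric_of_lt_one h0 h1).mul_left 2)
    have := integral_mono (fk_integrable μ ν r h0 k).norm
      (integrable_const (μ := μ.prod (ν.prod ν)) (2 * r^k)) (fun q => fk_bound r h0 k q)
    simpa using this
  have hS := hasSum_integral_of_summable_integral_norm
    (fun k => fk_integrable μ ν r h0 k) hs
  simp_rw [fun q => (fk_hasSum r h0 h1 q).tsum_eq] at hS
  have := le_hasSum hS k (fun j _ => by
    rw [fk_integral μ ν hν r h0]
    have : 0 ≤ ∫ g, ‖GG ν j g - GG ν j 1‖^2 ∂μ := integral_nonneg fun _ => by positivity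
    positivity)
  rwa [fk_integral μ ν hν r h0] at this


theorem moments_ext (ν₁ ν₂ : Measure S1) [IsProbabilityMeasure ν₁] [IsProbabilityMeasure ν₂]
    (h : ∀ k : ℕ, ∫ z, (z : ℂ)^k ∂ν₁ = ∫ z, (z : ℂ)^k ∂ν₂) : ν₁ = ν₂ := by
  let zz : BoundedContinuousFunction S1 ℂ :=
    BoundedContinuousFunction.mkOfCompact ⟨fun z => (z : ℂ), by fun_prop⟩
  have hzz : ∀ z : S1, zz z = z := fun z => rfl
  apply ext_of_forall_mem_subalgebra_integral_eq_of_polish (𝕜 := ℂ)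
    (A := StarAlgebra.adjoin ℂ {zz})
  · intro x y hxy
    refine ⟨fun z => (z : ℂ), ⟨BoundedContinuousFunction.toContinuousMapStarₐ ℂ zz, ?_, rfl⟩, ?_⟩
    · exact ⟨zz, StarAlgebra.subset_adjoin ℂ _ rfl, rfl⟩
    · exact fun e => hxy (Subtype.ext e)
  · intro f hf
    have hf2 : f ∈ Submodule.span ℂ (Submonoid.closure ({zz, star zz} : Set _) : Set (BoundedContinuousFunction S1 ℂ)) := by
      rw [← Algebra.adjoin_eq_span]
      have e : ({zz, star zz} : Set (BoundedContinuousFunction S1 ℂ)) = {zz} ∪ star {zz} := by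
        rw [Set.star_singleton]; rfl
      rw [e]
      exact hf
    clear hf
    have hi : ∀ (ν : Measure S1) [IsProbabilityMeasure ν] (f : BoundedContinuousFunction S1 ℂ),
      Integrable (fun x => f x) ν := fun ν _ f => f.integrable ν
    induction hf2 using Submodule.span_induction with
    | mem x hx =>
      obtain ⟨m, n, rfl⟩ := (Submonoid.mem_closure_pair _ _ _).1 hx
      have hc : ∀ k : ℕ, ∫ z, conj ((z : ℂ)^k) ∂ν₁ = ∫ z, conj ((z : ℂ)^k) ∂ν₂ := by
        intro k
        rw [integral_conj, integral_conj, h]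
      have hv : ∀ z : S1, (zz^m * (star zz)^n) z = (z : ℂ)^m * (conj (z : ℂ))^n := fun z => by
        simp [hzz]
      simp_rw [hv]
      rcases le_total n m with hnm | hnm
      · obtain ⟨d, rfl⟩ := Nat.exists_eq_add_of_le hnm
        have : ∀ z : S1, (z : ℂ)^(n + d) * (conj (z : ℂ))^n = (z : ℂ)^d := by
          intro z
          have := S1_mul_conj z
          rw [pow_add, mul_right_comm, ← mul_pow, this, one_pow, one_mul]
        simp_rw [this]; exact h d
      · obtain ⟨d, rfl⟩ := Nat.exists_eq_add_of_le hnm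
        have : ∀ z : S1, (z : ℂ)^m * (conj (z : ℂ))^(m + d) = conj ((z : ℂ)^d) := by
          intro z
          have := S1_mul_conj z
          rw [pow_add, ← mul_assoc, ← mul_pow, this, one_pow, one_mul, map_pow]
        simp_rw [this]; exact hc d
    | zero => simp
    | add x y hx hy h1 h2 =>
      simp only [BoundedContinuousFunction.add_apply]
      rw [integral_add (hi ν₁ x) (hi ν₁ y), integral_add (hi ν₂ x) (hi ν₂ y), h1, h2]
    | smul a x hx h1 =>
      simp only [BoundedContinuousFunction.smul_apply]
      rw [integral_smul, integral_smul, h1]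

theorem log_nrm_nonneg (g : SL2) : 0 ≤ Real.log (nrm g) := Real.log_nonneg (one_le_nrm g)

theorem integrable_logjj (μ : Measure SL2) [IsProbabilityMeasure μ] (ν : Measure S1)
    [IsProbabilityMeasure ν] (hintg : Integrable (fun g => Real.log (nrm g)) μ) :
    Integrable (fun p : SL2 × S1 => Real.log ‖jj p.1 p.2‖) (μ.prod ν) :=
  (hintg.comp_fst ν).mono' continuous_log_jj.aestronglyMeasurable
    (Filter.Eventually.of_forall fun p => abs_log_jj p.1 p.2)

theorem energy_tendsto (μ : Measure SL2) [IsProbabilityMeasure μ] (ν : Measure S1)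
    [IsProbabilityMeasure ν] (hna : ∀ z, ν {z} = 0)
    (hintg : Integrable (fun g => Real.log (nrm g)) μ) :
    Tendsto (fun r => ∫ q, (KK r (mob q.1 q.2.1) (mob q.1 q.2.2) - KK r q.2.1 q.2.2)
        ∂(μ.prod (ν.prod ν))) (nhdsWithin 1 (Set.Iio 1))
      (nhds (2 * ∫ p, Real.log ‖jj p.1 p.2‖ ∂(μ.prod ν))) := by
  have hdiag : ∀ᵐ q ∂(μ.prod (ν.prod ν)), q.2.1 ≠ q.2.2 := by
    have h1 : ∀ᵐ p ∂(ν.prod ν), p.1 ≠ p.2 := by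
      have hm : MeasurableSet {p : S1 × S1 | p.1 = p.2} :=
        (isClosed_eq continuous_fst continuous_snd).measurableSet
      rw [ae_iff]
      simp only [ne_eq, not_not]
      rw [Measure.measure_prod_null hm]
      refine Filter.Eventually.of_forall fun z => ?_
      have : Prod.mk z ⁻¹' {p : S1 × S1 | p.1 = p.2} = {z} := by
        ext w; simp [eq_comm]
      show ν (Prod.mk z ⁻¹' {p : S1 × S1 | p.1 = p.2}) = 0
      rw [this]; exact hna z
    exact Measure.quasiMeasurePreserving_snd.ae h1
  have hI := integrable_logjj μ ν hintg
  have hr : ∀ᶠ r : ℝ in nhdsWithin 1 (Set.Iio 1), 0 ≤ r ∧ r < 1 := by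
    have h1 : ∀ᶠ r : ℝ in nhdsWithin 1 (Set.Iio 1), 0 ≤ r :=
      nhdsWithin_le_nhds (Ici_mem_nhds (by norm_num))
    filter_upwards [h1, self_mem_nhdsWithin] with r a b
    exact ⟨a, b⟩
  have hT := tendsto_integral_filter_of_dominated_convergence (μ := μ.prod (ν.prod ν))
    (F := fun r q => KK r (mob q.1 q.2.1) (mob q.1 q.2.2) - KK r q.2.1 q.2.2)
    (f := fun q => Real.log ‖jj q.1 q.2.1‖ + Real.log ‖jj q.1 q.2.2‖)
    (l := nhdsWithin 1 (Set.Iio 1)) (fun q => 2 * Real.log (nrm q.1))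
    (Filter.Eventually.of_forall fun r => by
      have h1 := cont_m1
      have h2 := cont_m2
      have c1 : Continuous fun q : SL2 × S1 × S1 =>
        ‖1 - (r : ℂ) * ((mob q.1 q.2.1 : ℂ) * conj (mob q.1 q.2.2 : ℂ))‖ := by fun_prop
      have c2 : Continuous fun q : SL2 × S1 × S1 =>
        ‖1 - (r : ℂ) * ((q.2.1 : ℂ) * conj (q.2.2 : ℂ))‖ := by fun_prop
      exact (c1.measurable.log.neg.sub c2.measurable.log.neg).aestronglyMeasurable)
    (by
      filter_upwards [hr] with r hr
      exact Filter.Eventually.of_forall fun q => KK_bound r hr.1 hr.2 q.1 q.2.1 q.2.2)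
    ((hintg.const_mul 2).comp_fst _)
    (by
      filter_upwards [hdiag] with q hq
      exact KK_tendsto q.1 q.2.1 q.2.2 hq)
  convert hT using 2
  have m1 : MeasurePreserving (fun q : SL2 × S1 × S1 => (q.1, q.2.1)) (μ.prod (ν.prod ν))
      (μ.prod ν) := (MeasurePreserving.id μ).prod measurePreserving_fst
  have m2 : MeasurePreserving (fun q : SL2 × S1 × S1 => (q.1, q.2.2)) (μ.prod (ν.prod ν))
      (μ.prod ν) := (MeasurePreserving.id μ).prod measurePreserving_snd
  have hA : AEStronglyMeasurable (fun p : SL2 × S1 => Real.log ‖jj p.1 p.2‖) (μ.prod ν) :=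
    continuous_log_jj.aestronglyMeasurable
  have i1 : Integrable (fun q : SL2 × S1 × S1 => Real.log ‖jj q.1 q.2.1‖) (μ.prod (ν.prod ν)) :=
    (m1.integrable_comp hA).2 hI
  have i2 : Integrable (fun q : SL2 × S1 × S1 => Real.log ‖jj q.1 q.2.2‖) (μ.prod (ν.prod ν)) :=
    (m2.integrable_comp hA).2 hI
  have e1 : ∫ q, Real.log ‖jj q.1 q.2.1‖ ∂(μ.prod (ν.prod ν)) =
      ∫ p, Real.log ‖jj p.1 p.2‖ ∂(μ.prod ν) := by
    conv_rhs => rw [← m1.map_eq]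
    rw [integral_map m1.measurable.aemeasurable (by rw [m1.map_eq]; exact hA)]
  have e2 : ∫ q, Real.log ‖jj q.1 q.2.2‖ ∂(μ.prod (ν.prod ν)) =
      ∫ p, Real.log ‖jj p.1 p.2‖ ∂(μ.prod ν) := by
    conv_rhs => rw [← m2.map_eq]
    rw [integral_map m2.measurable.aemeasurable (by rw [m2.map_eq]; exact hA)]
  rw [integral_add i1 i2, e1, e2]
  ring

theorem drift_pos (μ : Measure SL2) [IsProbabilityMeasure μ] (ν : Measure S1)
    [IsProbabilityMeasure ν] (hν : (μ.prod ν).map (fun p => mob p.1 p.2) = ν)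
    (hH : ¬ Group.IsSolvable (Subgroup.closure (measSupp μ)))
    (hintg : Integrable (fun g => Real.log (nrm g)) μ) :
    0 < ∫ p, Real.log ‖jj p.1 p.2‖ ∂(μ.prod ν) := by
  by_contra hlam
  push Not at hlam
  have hna := stat_noatom μ ν hν hH
  have hT := energy_tendsto μ ν hna hintg
  have hr : ∀ᶠ r : ℝ in nhdsWithin 1 (Set.Iio 1), 0 ≤ r ∧ r < 1 := by
    have h1 : ∀ᶠ r : ℝ in nhdsWithin 1 (Set.Iio 1), 0 ≤ r :=
      nhdsWithin_le_nhds (Ici_mem_nhds (by norm_num))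
    filter_upwards [h1, self_mem_nhdsWithin] with r a b
    exact ⟨a, b⟩
  have hzero : ∀ k : ℕ, ∫ g, ‖GG ν k g - GG ν k 1‖^2 ∂μ = 0 := by
    intro k
    set Γ := ∫ g, ‖GG ν k g - GG ν k 1‖^2 ∂μ with hΓ
    have hΓ0 : 0 ≤ Γ := integral_nonneg fun _ => by positivity
    rcases Nat.eq_zero_or_pos k with hk | hk
    · rw [hΓ]; subst hk; simp [GG]
    have hc : Tendsto (fun r : ℝ => r^k / k * Γ) (nhdsWithin 1 (Set.Iio 1))
        (nhds ((1:ℝ)^k / k * Γ)) := by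
      have : Continuous (fun r : ℝ => r^k / k * Γ) := by fun_prop
      exact (this.tendsto 1).mono_left nhdsWithin_le_nhds
    have hle := le_of_tendsto_of_tendsto hc hT (by
      filter_upwards [hr] with r hr
      exact energy_ge μ ν hν r hr.1 hr.2 k)
    rw [one_pow] at hle
    have hk' : (0:ℝ) < 1 / k := by positivity
    have : Γ ≤ 0 := by
      by_contra hn
      push Not at hn
      have := mul_pos hk' hn
      linarith
    exact le_antisymm this hΓ0
  have hae : ∀ᵐ g ∂μ, g ∈ {g : SL2 | ∀ k, GG ν k g = GG ν k 1} := by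
    simp only [Set.mem_setOf_eq]
    rw [ae_all_iff]
    intro k
    have hcont := continuous_GG ν k
    have hi : Integrable (fun g => ‖GG ν k g - GG ν k 1‖^2) μ := by
      refine Integrable.of_bound (C := 2^2) (by fun_prop) (Filter.Eventually.of_forall fun g => ?_)
      rw [Real.norm_of_nonneg (by positivity)]
      gcongr
      refine (norm_sub_le _ _).trans ?_
      linarith [GG_norm_le ν k g, GG_norm_le ν k 1]
    have := (integral_eq_zero_iff_of_nonneg (fun g => by positivity) hi).1 (hzero k)
    filter_upwards [this] with g hg
    have h2 : ‖GG ν k g - GG ν k 1‖^2 = 0 := hg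
    rwa [sq_eq_zero_iff, norm_eq_zero, sub_eq_zero] at h2
  have hcl : IsClosed {g : SL2 | ∀ k, GG ν k g = GG ν k 1} := by
    simp only [Set.setOf_forall]
    exact isClosed_iInter fun k => isClosed_eq (continuous_GG ν k) continuous_const
  have hsup := supp_subset μ _ hcl hae
  have hmap : ∀ g ∈ measSupp μ, ν.map (mob g) = ν := by
    intro g hg
    have hm : Measurable (mob g) := (continuous_mob_left g).measurable
    have : IsProbabilityMeasure (ν.map (mob g)) := Measure.isProbabilityMeasure_map hm.aemeasurable
    apply moments_ext
    intro k
    have hc : Continuous (fun z : S1 => (z : ℂ)^k) := by fun_prop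
    rw [integral_map hm.aemeasurable hc.aestronglyMeasurable]
    have := hsup hg k
    simpa only [GG, mob_one] using this
  refine no_invariant _ hH ν hna ?_
  have hmm : ∀ g : SL2, Measurable (mob g) := fun g => (continuous_mob_left g).measurable
  intro g hg
  induction hg using Subgroup.closure_induction with
  | mem x hx => exact hmap x hx
  | one =>
    have : mob 1 = id := by ext1 z; exact mob_one z
    rw [this, Measure.map_id]
  | mul x y _ _ hx hy =>
    have : mob (x * y) = mob x ∘ mob y := by ext1 z; exact mob_mul x y z
    rw [this, ← Measure.map_map (hmm x) (hmm y), hy, hx]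
  | inv x _ hx =>
    conv_lhs => rw [← hx]
    rw [Measure.map_map (hmm _) (hmm _)]
    have : mob x⁻¹ ∘ mob x = id := by ext1 z; exact mob_inv_mob x z
    rw [this, Measure.map_id]


theorem riesz_S1 (L : C(S1, ℝ) →ₗ[ℝ] ℝ) (hpos : ∀ f : C(S1, ℝ), (∀ x, 0 ≤ f x) → 0 ≤ L f)
    (h1 : L 1 = 1) : ∃ ν : Measure S1, IsProbabilityMeasure ν ∧ ∀ f : C(S1, ℝ),
      L f = ∫ z, f z ∂ν := by
  let T : CompactlySupportedContinuousMap S1 ℝ →ₗ[ℝ] ℝ :=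
    { toFun := fun f => L f.toContinuousMap
      map_add' := fun f g => by rw [← map_add]; rfl
      map_smul' := fun c f => by rw [RingHom.id_apply, ← map_smul]; rfl }
  let Λ := PositiveLinearMap.mk₀ T (fun f hf => hpos _ hf)
  have hintg : ∀ f : C(S1, ℝ), L f = ∫ z, f z ∂(RealRMK.rieszMeasure Λ) := by
    intro f
    have := RealRMK.integral_rieszMeasure Λ (CompactlySupportedContinuousMap.continuousMapEquiv f)
    exact this.symm
  refine ⟨RealRMK.rieszMeasure Λ, ?_, hintg⟩
  have h2 := hintg 1
  rw [h1] at h2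
  simp only [ContinuousMap.one_apply, integral_const, smul_eq_mul, mul_one] at h2
  constructor
  have h3 : (RealRMK.rieszMeasure Λ) Set.univ ≠ ⊤ := measure_ne_top _ _
  rw [← ENNReal.ofReal_toReal h3]
  have : ((RealRMK.rieszMeasure Λ) Set.univ).toReal = 1 := h2.symm
  rw [this, ENNReal.ofReal_one]

theorem continuous_P (μ : Measure SL2) [IsProbabilityMeasure μ] (h : C(S1, ℝ)) :
    Continuous (fun z => ∫ g, h (mob g z) ∂μ) := by
  apply continuous_of_dominated (bound := fun _ => ‖h‖)
  · intro z
    have := continuous_mob_fst z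
    have h2 : Continuous (fun g => h (mob g z)) := by fun_prop
    exact h2.aestronglyMeasurable
  · intro z
    exact Filter.Eventually.of_forall fun g => h.norm_coe_le_norm _
  · exact integrable_const _
  · refine Filter.Eventually.of_forall fun g => ?_
    have := continuous_mob_left g
    fun_prop

theorem integrable_P (μ : Measure SL2) [IsProbabilityMeasure μ] (h : C(S1, ℝ)) (z : S1) :
    Integrable (fun g => h (mob g z)) μ := by
  have := continuous_mob_fst z
  have h2 : Continuous (fun g => h (mob g z)) := by fun_prop
  exact Integrable.of_bound h2.aestronglyMeasurable ‖h‖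
    (Filter.Eventually.of_forall fun g => h.norm_coe_le_norm _)

/-- The Markov operator minus the identity. -/
def QQ (μ : Measure SL2) [IsProbabilityMeasure μ] : C(S1, ℝ) →ₗ[ℝ] C(S1, ℝ) where
  toFun h := ⟨fun z => ∫ g, h (mob g z) ∂μ, continuous_P μ h⟩ - h
  map_add' f h := by
    ext z
    simp only [ContinuousMap.sub_apply, ContinuousMap.coe_mk, ContinuousMap.add_apply]
    rw [integral_add (integrable_P μ f z) (integrable_P μ h z)]
    ring
  map_smul' c h := by
    ext z
    simp only [ContinuousMap.sub_apply, ContinuousMap.coe_mk, ContinuousMap.smul_apply,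
      RingHom.id_apply, smul_eq_mul]
    rw [integral_const_mul]
    ring

theorem QQ_apply (μ : Measure SL2) [IsProbabilityMeasure μ] (h : C(S1, ℝ)) (z : S1) :
    QQ μ h z = ∫ g, h (mob g z) ∂μ - h z := rfl

theorem continuous_logjj_fst (z : S1) : Continuous (fun g : SL2 => Real.log ‖jj g z‖) := by
  have h : Continuous (fun g : SL2 => ((g, z) : SL2 × S1)) := by fun_prop
  have := continuous_log_jj.comp h
  exact this

theorem continuous_logjj_snd (g : SL2) : Continuous (fun z : S1 => Real.log ‖jj g z‖) := by
  have h : Continuous (fun z : S1 => ((g, z) : SL2 × S1)) := by fun_prop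
  have := continuous_log_jj.comp h
  exact this

theorem continuous_phi (μ : Measure SL2) [IsProbabilityMeasure μ]
    (hintg : Integrable (fun g => Real.log (nrm g)) μ) :
    Continuous (fun z => ∫ g, Real.log ‖jj g z‖ ∂μ) := by
  apply continuous_of_dominated (bound := fun g => Real.log (nrm g))
  · intro z
    exact (continuous_logjj_fst z).aestronglyMeasurable
  · intro z
    exact Filter.Eventually.of_forall fun g => abs_log_jj g z
  · exact hintg
  · exact Filter.Eventually.of_forall fun g => continuous_logjj_snd g

theorem integrable_logjj_fst (μ : Measure SL2) [IsProbabilityMeasure μ]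
    (hintg : Integrable (fun g => Real.log (nrm g)) μ) (z : S1) :
    Integrable (fun g => Real.log ‖jj g z‖) μ :=
  hintg.mono' (continuous_logjj_fst z).aestronglyMeasurable
    (Filter.Eventually.of_forall fun g => abs_log_jj g z)

theorem exists_A0 (μ : Measure SL2) [IsProbabilityMeasure μ]
    (hH : ¬ Group.IsSolvable (Subgroup.closure (measSupp μ)))
    (hintg : Integrable (fun g => Real.log (nrm g)) μ) :
    ∃ A : C(S1, ℝ), ∀ z, 0 < ∫ g, Real.log ‖jj g z‖ ∂μ + QQ μ A z := by
  by_contra hno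
  push Not at hno
  let φ : C(S1, ℝ) := ⟨fun z => ∫ g, Real.log ‖jj g z‖ ∂μ, continuous_phi μ hintg⟩
  let s : Set C(S1, ℝ) := {f | Set.MapsTo f Set.univ (Set.Ioi 0)}
  have hso : IsOpen s := ContinuousMap.isOpen_setOf_mapsTo isCompact_univ isOpen_Ioi
  have hmem : ∀ f : C(S1, ℝ), (∀ x, 0 < f x) → f ∈ s := fun f hf x _ => hf x
  have hmem2 : ∀ f ∈ s, ∀ x, 0 < f x := fun f hf x => hf (Set.mem_univ x)
  have hsc : Convex ℝ s := by
    intro f hf h hh a b ha hb hab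
    apply hmem
    intro x
    have h1 := hmem2 f hf x
    have h2 := hmem2 h hh x
    simp only [ContinuousMap.add_apply, ContinuousMap.smul_apply, smul_eq_mul]
    rcases ha.lt_or_eq with h | h
    · have := mul_pos h h1
      have := mul_nonneg hb h2.le
      linarith
    · have : b = 1 := by linarith
      rw [← h, this]; simpa using h2
  let V : Set C(S1, ℝ) := Set.range fun h => φ + QQ μ h
  have hVc : Convex ℝ V := by
    rintro _ ⟨f, rfl⟩ _ ⟨h, rfl⟩ a b ha hb hab
    refine ⟨a • f + b • h, ?_⟩
    simp only [map_add, map_smul, smul_add]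
    have : φ = a • φ + b • φ := by rw [← add_smul, hab, one_smul]
    nth_rewrite 1 [this]
    abel
  have hdisj : Disjoint s V := by
    rw [Set.disjoint_left]
    rintro _ hf ⟨h, rfl⟩
    obtain ⟨z, hz⟩ := hno h
    exact absurd (hmem2 _ hf z) (not_lt.2 hz)
  obtain ⟨f, u, hfs, hfV⟩ := geometric_hahn_banach_open hsc hso hVc hdisj
  have hu : 0 ≤ u := by
    by_contra hu
    push Not at hu
    have h1 := hfs (1 : C(S1, ℝ)) (hmem _ fun x => by simp)
    have hf1 : f 1 < 0 := h1.trans hu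
    have h2 := hfs ((u / (2 * f 1)) • (1 : C(S1, ℝ))) (hmem _ fun x => by
      simp only [ContinuousMap.smul_apply, ContinuousMap.one_apply, smul_eq_mul, mul_one]
      exact div_pos_of_neg_of_neg hu (by linarith))
    rw [map_smul, smul_eq_mul] at h2
    have hne : f 1 ≠ 0 := hf1.ne
    have : u / (2 * f 1) * f 1 = u / 2 := by field_simp
    rw [this] at h2
    linarith
  have hneg : ∀ a ∈ s, f a ≤ 0 := by
    intro a ha
    by_contra hn
    push Not at hn
    have h2 := hfs (((u + 1) / f a) • a) (hmem _ fun x => by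
      have := hmem2 a ha x
      simp only [ContinuousMap.smul_apply, smul_eq_mul]
      positivity)
    rw [map_smul, smul_eq_mul, div_mul_cancel₀ _ hn.ne'] at h2
    linarith
  have hneg' : ∀ a : C(S1, ℝ), (∀ x, 0 ≤ a x) → f a ≤ 0 := by
    intro a ha
    have h1 : ∀ ε : ℝ, 0 < ε → f a ≤ ε * (- f 1) := by
      intro ε hε
      have := hneg (a + ε • 1) (hmem _ fun x => by
        simp only [ContinuousMap.add_apply, ContinuousMap.smul_apply, ContinuousMap.one_apply,
          smul_eq_mul, mul_one]
        have := ha x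
        linarith)
      rw [map_add, map_smul, smul_eq_mul] at this
      linarith
    have hf1 : f 1 ≤ 0 := hneg 1 (hmem _ fun x => by simp)
    by_contra hn
    push Not at hn
    have h2 := h1 (f a / (2 * (1 - f 1))) (by apply div_pos hn; linarith)
    have h3 : f a / (2 * (1 - f 1)) * (- f 1) ≤ f a / 2 := by
      rw [div_mul_eq_mul_div, div_le_iff₀ (by linarith)]
      nlinarith
    linarith
  have hQ : ∀ h, f (QQ μ h) = 0 := by
    intro h
    by_contra hn
    have h1 := hfV (φ + QQ μ (((u - 1 - f φ) / f (QQ μ h)) • h)) ⟨_, rfl⟩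
    rw [map_add, map_smul, map_smul, smul_eq_mul, div_mul_cancel₀ _ hn] at h1
    linarith
  have hφ : u ≤ f φ := by
    have := hfV (φ + QQ μ 0) ⟨0, rfl⟩
    simpa using this
  have hf1 : f 1 < 0 := by
    have h1 : f 1 ≤ 0 := hneg 1 (hmem _ fun x => by simp)
    rcases h1.lt_or_eq with h | h
    · exact h
    · have h2 := hfs 1 (hmem _ fun x => by simp)
      rw [h] at h2
      have h3 := hneg' (φ + ‖φ‖ • 1) (fun x => by
        have := abs_le.1 (φ.norm_coe_le_norm x)
        simp only [ContinuousMap.add_apply, ContinuousMap.smul_apply, ContinuousMap.one_apply,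
          smul_eq_mul, mul_one]
        linarith [this.1])
      rw [map_add, map_smul, h, smul_zero, add_zero] at h3
      linarith
  let L : C(S1, ℝ) →ₗ[ℝ] ℝ := (f 1)⁻¹ • (f : C(S1, ℝ) →ₗ[ℝ] ℝ)
  have hL : ∀ h, L h = (f 1)⁻¹ * f h := fun h => rfl
  have hinv : (f 1)⁻¹ < 0 := inv_lt_zero.2 hf1
  obtain ⟨ν, hνp, hν⟩ := riesz_S1 L
    (fun h hh => by rw [hL]; exact mul_nonneg_of_nonpos_of_nonpos hinv.le (hneg' h hh))
    (by rw [hL]; exact inv_mul_cancel₀ hf1.ne)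
  have hstat : (μ.prod ν).map (fun p => mob p.1 p.2) = ν := by
    have : IsProbabilityMeasure ((μ.prod ν).map (fun p => mob p.1 p.2)) :=
      Measure.isProbabilityMeasure_map measurable_mob.aemeasurable
    apply ext_of_forall_integral_eq_of_IsFiniteMeasure
    intro h
    have hc := continuous_mob
    have hi : Integrable (fun p : SL2 × S1 => h (mob p.1 p.2)) (μ.prod ν) := by
      have h2 : Continuous (fun p : SL2 × S1 => h (mob p.1 p.2)) := h.continuous.comp hc
      exact Integrable.of_bound h2.aestronglyMeasurable ‖h‖
        (Filter.Eventually.of_forall fun g => h.norm_coe_le_norm _)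
    rw [integral_map measurable_mob.aemeasurable h.continuous.aestronglyMeasurable,
      integral_prod_symm _ hi]
    have e := hν (QQ μ h.toContinuousMap)
    rw [hL, hQ, mul_zero] at e
    have e2 : ∀ z, QQ μ h.toContinuousMap z = ∫ g, h (mob g z) ∂μ - h z := fun z => rfl
    simp_rw [e2] at e
    rw [integral_sub hi.integral_prod_right (h.integrable ν)] at e
    linarith
  have hd := drift_pos μ ν hstat hH hintg
  rw [integral_prod_symm _ (integrable_logjj μ ν hintg)] at hd
  have e := hν φ
  have e3 : ∫ z, φ z ∂ν = ∫ z, ∫ g, Real.log ‖jj g z‖ ∂μ ∂ν := rfl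
  rw [← e3, ← e, hL] at hd
  have : (f 1)⁻¹ * f φ ≤ 0 := mul_nonpos_of_nonpos_of_nonneg hinv.le (hu.trans hφ)
  linarith

theorem exists_A (μ : Measure SL2) [IsProbabilityMeasure μ]
    (hH : ¬ Group.IsSolvable (Subgroup.closure (measSupp μ)))
    (hintg : Integrable (fun g => Real.log (nrm g)) μ) :
    ∃ A : C(S1, ℝ), ∃ c > (0:ℝ), ∀ z,
      c ≤ ∫ g, (Real.log ‖jj g z‖ + A (mob g z) - A z) ∂μ := by
  obtain ⟨A, hA⟩ := exists_A0 μ hH hintg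
  have hcont : Continuous fun z => ∫ g, Real.log ‖jj g z‖ ∂μ + QQ μ A z :=
    (continuous_phi μ hintg).add (QQ μ A).continuous
  have : Nonempty S1 := ⟨⟨1, by simp⟩⟩
  obtain ⟨z0, -, hz0⟩ := isCompact_univ.exists_isMinOn Set.univ_nonempty hcont.continuousOn
  refine ⟨A, _, hA z0, fun z => ?_⟩
  have h1 := hz0 (Set.mem_univ z)
  have h2 : ∫ g, Real.log ‖jj g z0‖ ∂μ + QQ μ A z0 ≤ ∫ g, Real.log ‖jj g z‖ ∂μ + QQ μ A z := h1
  refine h2.trans (le_of_eq ?_)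
  rw [QQ_apply, integral_sub (f := fun g => Real.log ‖jj g z‖ + A (mob g z))
    ((integrable_logjj_fst μ hintg z).add (integrable_P μ A z)) (integrable_const _),
    integral_add (integrable_logjj_fst μ hintg z) (integrable_P μ A z)]
  simp
  ring


theorem exp_le_quad (y : ℝ) : Real.exp y ≤ 1 + y + y^2 * Real.exp |y| := by
  have h := Complex.norm_exp_sub_sum_le_norm_mul_exp (y : ℂ) 2
  have e : Complex.exp y - ∑ m ∈ Finset.range 2, (y : ℂ)^m / (m.factorial : ℂ) =
      ((Real.exp y - (1 + y) : ℝ) : ℂ) := by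
    simp [Finset.sum_range_succ]
  rw [e, Complex.norm_real, Complex.norm_real, Real.norm_eq_abs, Real.norm_eq_abs, sq_abs] at h
  linarith [(abs_le.1 h).2]

theorem sq_exp_bound (ε δ Y : ℝ) (hε : 0 < ε) (hδ : δ ≤ ε / 2) (hY : 0 ≤ Y) :
    Y^2 * Real.exp (δ * Y) ≤ 8 / ε^2 * Real.exp (ε * Y) := by
  have h1 : (ε * Y / 2)^2 / 2 ≤ Real.exp (ε * Y / 2) := by
    have := Real.quadratic_le_exp_of_nonneg (x := ε * Y / 2) (by positivity)
    have h0 : 0 ≤ ε * Y / 2 := by positivity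
    linarith
  have h2 : Y^2 ≤ 8 / ε^2 * Real.exp (ε * Y / 2) := by
    rw [div_mul_eq_mul_div, le_div_iff₀ (by positivity)]
    nlinarith
  have h3 : Real.exp (δ * Y) ≤ Real.exp (ε * Y / 2) := by
    apply Real.exp_le_exp.2; nlinarith
  calc Y^2 * Real.exp (δ * Y) ≤ (8 / ε^2 * Real.exp (ε * Y / 2)) * Real.exp (ε * Y / 2) := by
        gcongr
    _ = 8 / ε^2 * Real.exp (ε * Y) := by
        rw [mul_assoc, ← Real.exp_add]; ring_nf

theorem moment_integrable (μ : Measure SL2) [IsProbabilityMeasure μ] (hmom : HasExpMoment μ) :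
    ∃ ε > (0:ℝ), Integrable (fun g => Real.exp (ε * Real.log (nrm g))) μ := by
  obtain ⟨ε, hε, h⟩ := hmom
  refine ⟨ε, hε, ?_⟩
  have e : ∀ g, opNorm g ^ ε = Real.exp (ε * Real.log (nrm g)) := by
    intro g
    rw [opNorm_eq, Real.rpow_def_of_pos (by linarith [one_le_nrm g]), mul_comm]
  simp_rw [e] at h
  have hc : Continuous fun g => Real.exp (ε * Real.log (nrm g)) := by
    have := continuous_nrm
    have h2 : Continuous fun g => Real.log (nrm g) :=
      this.log fun g => by linarith [one_le_nrm g]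
    fun_prop
  exact (lintegral_ofReal_ne_top_iff_integrable hc.aestronglyMeasurable
    (Filter.Eventually.of_forall fun g => by positivity)).1 h.ne

theorem log_integrable (μ : Measure SL2) [IsProbabilityMeasure μ] (ε : ℝ) (hε : 0 < ε)
    (h : Integrable (fun g => Real.exp (ε * Real.log (nrm g))) μ) :
    Integrable (fun g => Real.log (nrm g)) μ := by
  have h2 : Continuous fun g => Real.log (nrm g) :=
    continuous_nrm.log fun g => by linarith [one_le_nrm g]
  refine (h.const_mul (1 / ε)).mono' h2.aestronglyMeasurable
    (Filter.Eventually.of_forall fun g => ?_)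
  rw [Real.norm_of_nonneg (log_nrm_nonneg g), div_mul_eq_mul_div, one_mul, le_div_iff₀ hε]
  have := Real.add_one_le_exp (ε * Real.log (nrm g))
  linarith

theorem contraction (μ : Measure SL2) [IsProbabilityMeasure μ] (hmom : HasExpMoment μ)
    (hH : ¬ Group.IsSolvable (Subgroup.closure (measSupp μ))) :
    ∃ A : C(S1, ℝ), ∃ δ > (0:ℝ), ∃ ρ < (1:ℝ), ∀ z,
      ∫⁻ g, ENNReal.ofReal (Real.exp (-(δ * (Real.log ‖jj g z‖ + A (mob g z) - A z)))) ∂μ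
        ≤ ENNReal.ofReal ρ := by
  obtain ⟨ε, hε, hmi⟩ := moment_integrable μ hmom
  have hintg := log_integrable μ ε hε hmi
  obtain ⟨A, c, hc, hA⟩ := exists_A μ hH hintg
  set a := ‖A‖ with ha
  have ha0 : 0 ≤ a := norm_nonneg _
  set M := ∫ g, 8 / ε^2 * Real.exp (ε * (2 * a)) * Real.exp (ε * Real.log (nrm g)) ∂μ with hM
  have hM0 : 0 ≤ M := integral_nonneg fun g => by positivity
  set δ := min (ε / 2) (c / (2 * (M + 1))) with hδ
  have hδ0 : 0 < δ := lt_min (by positivity) (by positivity)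
  have hδ1 : δ ≤ ε / 2 := min_le_left _ _
  have hδ2 : δ * (2 * (M + 1)) ≤ c := by
    have : δ ≤ c / (2 * (M + 1)) := min_le_right _ _
    rwa [le_div_iff₀ (by positivity)] at this
  refine ⟨A, δ, hδ0, 1 - δ * c / 2, by have := mul_pos hδ0 hc; linarith, fun z => ?_⟩
  set X : SL2 → ℝ := fun g => Real.log ‖jj g z‖ + A (mob g z) - A z with hX
  have hXb : ∀ g, |X g| ≤ Real.log (nrm g) + 2 * a := by
    intro g
    have h1 := abs_le.1 (abs_log_jj g z)
    have h2 := abs_le.1 (A.norm_coe_le_norm (mob g z))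
    have h3 := abs_le.1 (A.norm_coe_le_norm z)
    rw [abs_le]
    constructor <;> simp only [hX] <;> linarith [h1.1, h1.2, h2.1, h2.2, h3.1, h3.2]
  have hXi : Integrable X μ :=
    ((integrable_logjj_fst μ hintg z).add (integrable_P μ A z)).sub (integrable_const _)
  have hB : ∀ g, Real.exp (-(δ * X g)) ≤ 1 - δ * X g +
      δ^2 * (8 / ε^2 * Real.exp (ε * (2 * a)) * Real.exp (ε * Real.log (nrm g))) := by
    intro g
    set Y := Real.log (nrm g) + 2 * a with hY
    have hY0 : 0 ≤ Y := (abs_nonneg _).trans (hXb g)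
    have h1 := exp_le_quad (-(δ * X g))
    have h2 : |-(δ * X g)| ≤ δ * Y := by
      rw [abs_neg, abs_mul, abs_of_pos hδ0]
      exact mul_le_mul_of_nonneg_left (hXb g) hδ0.le
    have h3 : (-(δ * X g))^2 ≤ (δ * Y)^2 := by
      rw [← sq_abs]; gcongr
    have h4 : (-(δ * X g))^2 * Real.exp |-(δ * X g)| ≤ (δ * Y)^2 * Real.exp (δ * Y) := by
      gcongr
    have h5 := sq_exp_bound ε δ Y hε hδ1 hY0
    have h6 : Real.exp (ε * Y) = Real.exp (ε * (2 * a)) * Real.exp (ε * Real.log (nrm g)) := by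
      rw [← Real.exp_add, hY]; ring_nf
    rw [h6] at h5
    have h7 : (δ * Y)^2 * Real.exp (δ * Y) ≤
        δ^2 * (8 / ε^2 * Real.exp (ε * (2 * a)) * Real.exp (ε * Real.log (nrm g))) := by
      rw [mul_pow, mul_assoc]
      apply mul_le_mul_of_nonneg_left _ (by positivity)
      linarith
    linarith
  have iE : Integrable (fun g => 8 / ε^2 * Real.exp (ε * (2 * a)) *
      Real.exp (ε * Real.log (nrm g))) μ := hmi.const_mul _
  have i1 : Integrable (fun g => 1 - δ * X g) μ := (integrable_const _).sub (hXi.const_mul _)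
  have i2 : Integrable (fun g => 1 - δ * X g +
      δ^2 * (8 / ε^2 * Real.exp (ε * (2 * a)) * Real.exp (ε * Real.log (nrm g)))) μ :=
    i1.add (iE.const_mul _)
  calc ∫⁻ g, ENNReal.ofReal (Real.exp (-(δ * X g))) ∂μ
      ≤ ∫⁻ g, ENNReal.ofReal (1 - δ * X g +
        δ^2 * (8 / ε^2 * Real.exp (ε * (2 * a)) * Real.exp (ε * Real.log (nrm g)))) ∂μ :=
        lintegral_mono fun g => ENNReal.ofReal_le_ofReal (hB g)
    _ = ENNReal.ofReal (∫ g, (1 - δ * X g +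
        δ^2 * (8 / ε^2 * Real.exp (ε * (2 * a)) * Real.exp (ε * Real.log (nrm g)))) ∂μ) := by
        rw [ofReal_integral_eq_lintegral_ofReal i2]
        exact Filter.Eventually.of_forall fun g => (Real.exp_pos _).le.trans (hB g)
    _ ≤ ENNReal.ofReal (1 - δ * c / 2) := by
        apply ENNReal.ofReal_le_ofReal
        rw [integral_add i1 (iE.const_mul _), integral_sub (integrable_const _) (hXi.const_mul _),
          integral_const_mul, integral_const_mul, ← hM]
        simp only [integral_const, probReal_univ, smul_eq_mul, mul_one]
        have h1 : c ≤ ∫ g, X g ∂μ := hA z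
        have h2 := mul_le_mul_of_nonneg_left h1 hδ0.le
        have h3 := mul_le_mul_of_nonneg_left hδ2 hδ0.le
        nlinarith [mul_pos hδ0 hδ0]


/-- The left random walk operator on functions on the group. -/
def TT (μ : Measure SL2) (f : SL2 → ENNReal) (x : SL2) : ENNReal := ∫⁻ h, f (h * x) ∂μ

theorem measurable_TT (μ : Measure SL2) [IsProbabilityMeasure μ] (f : SL2 → ENNReal)
    (hf : Measurable f) : Measurable (TT μ f) := by
  have hc : Continuous (fun p : SL2 × SL2 => p.1 * p.2) := by fun_prop
  have h : Measurable (fun p : SL2 × SL2 => f (p.1 * p.2)) := hf.comp hc.measurable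
  exact h.lintegral_prod_left'

theorem measurable_TT_iter (μ : Measure SL2) [IsProbabilityMeasure μ] (f : SL2 → ENNReal)
    (hf : Measurable f) (n : ℕ) : Measurable ((TT μ)^[n] f) := by
  induction n with
  | zero => exact hf
  | succ n ih =>
    rw [Function.iterate_succ_apply']
    exact measurable_TT μ _ ih

theorem word_succ {n : ℕ} (g : Fin (n + 1) → SL2) :
    word g = g 0 * word (fun i : Fin n => g i.succ) := by
  unfold word
  rw [List.ofFn_succ, List.prod_cons]

theorem continuous_word (n : ℕ) : Continuous (fun g : Fin n → SL2 => word g) := by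
  induction n with
  | zero => simp only [word, List.ofFn_zero, List.prod_nil]; exact continuous_const
  | succ n ih =>
    simp_rw [word_succ]
    have h : Continuous (fun g : Fin (n + 1) → SL2 => fun i : Fin n => g i.succ) := by fun_prop
    have h2 := ih.comp h
    exact (continuous_apply 0).mul h2

theorem lintegral_word (μ : Measure SL2) [IsProbabilityMeasure μ] (x : SL2) (n : ℕ) :
    ∀ f : SL2 → ENNReal, Measurable f →
      ∫⁻ g, f (word g * x) ∂(μpi μ n) = (TT μ)^[n] f x := by
  induction n with
  | zero =>
    intro f hf
    have : ∀ g : Fin 0 → SL2, word g = 1 := fun g => by simp [word]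
    simp_rw [this, one_mul, lintegral_const]
    simp [μpi]
  | succ n ih =>
    intro f hf
    rw [Function.iterate_succ_apply, ← ih _ (measurable_TT μ f hf)]
    have hmp := measurePreserving_piFinSuccAbove (fun _ : Fin (n + 1) => μ) 0
    have hcw := continuous_word n
    have hm : Measurable (fun p : SL2 × (Fin n → SL2) => f (p.1 * word p.2 * x)) := by
      have : Continuous (fun p : SL2 × (Fin n → SL2) => p.1 * word p.2 * x) := by
        have h2 := hcw.comp (continuous_snd (X := SL2) (Y := Fin n → SL2))
        exact (continuous_fst.mul h2).mul continuous_const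
      exact hf.comp this.measurable
    have e1 : ∫⁻ g, f (word g * x) ∂(μpi μ (n + 1)) =
        ∫⁻ p, f (p.1 * word p.2 * x) ∂(μ.prod (μpi μ n)) := by
      have := hmp.lintegral_comp hm
      rw [μpi, μpi, ← this]
      congr 1
      ext g
      rw [word_succ]
      rfl
    have : IsProbabilityMeasure (μpi μ n) := by unfold μpi; infer_instance
    rw [e1, lintegral_prod_symm _ hm.aemeasurable]
    simp only [TT, mul_assoc]

theorem continuous_kappa : Continuous kappa := by
  have : kappa = fun g => Real.log (nrm g) := by ext g; exact kappa_eq g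
  rw [this]
  exact continuous_nrm.log fun g => by linarith [one_le_nrm g]

theorem measurableSet_pass (t : ℝ) :
    MeasurableSet {p : SL2 × SL2 | kappa p.2 < t ∧ t ≤ kappa (p.1 * p.2)} := by
  have h1 : Continuous (fun p : SL2 × SL2 => kappa p.2) := continuous_kappa.comp continuous_snd
  have h2 : Continuous (fun p : SL2 × SL2 => kappa (p.1 * p.2)) :=
    continuous_kappa.comp continuous_mul
  exact (measurableSet_lt h1.measurable measurable_const).inter
    (measurableSet_le measurable_const h2.measurable)

/-- The one-step passage probability. -/
def bb (μ : Measure SL2) (t : ℝ) (x : SL2) : ENNReal :=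
  μ {h | kappa x < t ∧ t ≤ kappa (h * x)}

theorem measurable_bb (μ : Measure SL2) [IsProbabilityMeasure μ] (t : ℝ) : Measurable (bb μ t) :=
  measurable_measure_prodMk_right (measurableSet_pass t)

theorem pass_eq (μ : Measure SL2) [IsProbabilityMeasure μ] (t : ℝ) (n : ℕ) :
    (μ.prod (μpi μ n)) {p : SL2 × (Fin n → SL2) |
      kappa (word p.2) < t ∧ t ≤ kappa (p.1 * word p.2)} = (TT μ)^[n] (bb μ t) 1 := by
  have : IsProbabilityMeasure (μpi μ n) := by unfold μpi; infer_instance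
  have hc : Continuous (fun p : SL2 × (Fin n → SL2) => (p.1, word p.2)) :=
    continuous_fst.prodMk ((continuous_word n).comp continuous_snd)
  have hm : MeasurableSet {p : SL2 × (Fin n → SL2) |
      kappa (word p.2) < t ∧ t ≤ kappa (p.1 * word p.2)} := hc.measurable (measurableSet_pass t)
  rw [Measure.prod_apply_symm hm, ← lintegral_word μ 1 n _ (measurable_bb μ t)]
  simp only [mul_one]
  rfl

/-- The Lyapunov function. -/
def FF (A : C(S1, ℝ)) (δ : ℝ) (z : S1) (y : SL2) : ENNReal :=
  ENNReal.ofReal (Real.exp (-(δ * (Real.log ‖jj y z‖ + A (mob y z)))))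

theorem FF_contr (μ : Measure SL2) [IsProbabilityMeasure μ] (A : C(S1, ℝ)) (δ ρ : ℝ)
    (hρ : ∀ z, ∫⁻ g, ENNReal.ofReal
      (Real.exp (-(δ * (Real.log ‖jj g z‖ + A (mob g z) - A z)))) ∂μ ≤ ENNReal.ofReal ρ)
    (z : S1) (y : SL2) : ∫⁻ h, FF A δ z (h * y) ∂μ ≤ ENNReal.ofReal ρ * FF A δ z y := by
  have e : ∀ h, FF A δ z (h * y) = FF A δ z y * ENNReal.ofReal
      (Real.exp (-(δ * (Real.log ‖jj h (mob y z)‖ + A (mob h (mob y z)) - A (mob y z))))) := by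
    intro h
    have h1 := jj_pos y z
    have h2 := jj_pos h (mob y z)
    rw [FF, FF, ← ENNReal.ofReal_mul (Real.exp_pos _).le, ← Real.exp_add, norm_jj_mul,
      Real.log_mul h1.ne' h2.ne', mob_mul]
    congr 2
    ring
  simp_rw [e]
  rw [lintegral_const_mul' _ _ (by rw [FF]; exact ENNReal.ofReal_ne_top), mul_comm]
  gcongr
  exact hρ _

theorem TT_iter_le (μ : Measure SL2) [IsProbabilityMeasure μ] (F f : SL2 → ENNReal) (c r : ENNReal)
    (hc : c ≠ ⊤) (hr : r ≠ ⊤) (hF : ∀ y, ∫⁻ h, F (h * y) ∂μ ≤ r * F y)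
    (hf : ∀ y, f y ≤ c * F y) (n : ℕ) : ∀ y, (TT μ)^[n] f y ≤ c * r^n * F y := by
  induction n with
  | zero => intro y; simpa using hf y
  | succ n ih =>
    intro y
    rw [Function.iterate_succ_apply']
    calc ∫⁻ h, (TT μ)^[n] f (h * y) ∂μ ≤ ∫⁻ h, c * r^n * F (h * y) ∂μ :=
          lintegral_mono fun h => ih _
      _ = c * r^n * ∫⁻ h, F (h * y) ∂μ :=
          lintegral_const_mul' _ _ (ENNReal.mul_ne_top hc (ENNReal.pow_ne_top hr))
      _ ≤ c * r^n * (r * F y) := by gcongr; exact hF y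
      _ = c * r^(n+1) * F y := by ring

theorem bb_le_one (μ : Measure SL2) [IsProbabilityMeasure μ] (t : ℝ) (x : SL2) : bb μ t x ≤ 1 :=
  prob_le_one

theorem sum_above (μ : Measure SL2) [IsProbabilityMeasure μ] (A : C(S1, ℝ)) (δ ρ : ℝ) (hδ : 0 < δ)
    (hρ : ∀ z, ∫⁻ g, ENNReal.ofReal
      (Real.exp (-(δ * (Real.log ‖jj g z‖ + A (mob g z) - A z)))) ∂μ ≤ ENNReal.ofReal ρ)
    (t : ℝ) (x : SL2) (hx : t ≤ kappa x) (N : ℕ) :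
    ∑ n ∈ Finset.range N, (TT μ)^[n] (bb μ t) x ≤
      ENNReal.ofReal (Real.exp (2 * δ * ‖A‖)) * (1 - ENNReal.ofReal ρ)⁻¹ := by
  obtain ⟨z, hz⟩ := exists_jj_eq x
  set c := ENNReal.ofReal (Real.exp (δ * (t + ‖A‖))) with hc
  have hb : ∀ y, bb μ t y ≤ c * FF A δ z y := by
    intro y
    by_cases hy : kappa y < t
    · refine (bb_le_one μ t y).trans ?_
      rw [hc, FF, ← ENNReal.ofReal_mul (Real.exp_pos _).le, ← Real.exp_add,
        ENNReal.one_le_ofReal]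
      apply Real.one_le_exp
      have h1 := (abs_le.1 (A.norm_coe_le_norm (mob y z))).2
      have h2 := (abs_le.1 (abs_log_jj y z)).2
      rw [kappa_eq] at hy
      rw [← sub_eq_add_neg, ← mul_sub]
      apply mul_nonneg hδ.le
      linarith
    · have : {h | kappa y < t ∧ t ≤ kappa (h * y)} = (∅ : Set SL2) := by
        ext h; simp [hy]
      rw [bb, this, measure_empty]
      exact zero_le
  have hF : c * FF A δ z x ≤ ENNReal.ofReal (Real.exp (2 * δ * ‖A‖)) := by
    rw [hc, FF, ← ENNReal.ofReal_mul (Real.exp_pos _).le, ← Real.exp_add]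
    apply ENNReal.ofReal_le_ofReal
    apply Real.exp_le_exp.2
    have h1 := (abs_le.1 (A.norm_coe_le_norm (mob x z))).1
    rw [kappa_eq, ← hz] at hx
    have := mul_le_mul_of_nonneg_left (add_le_add hx h1) hδ.le
    linarith
  calc ∑ n ∈ Finset.range N, (TT μ)^[n] (bb μ t) x
      ≤ ∑ n ∈ Finset.range N, ENNReal.ofReal (Real.exp (2 * δ * ‖A‖)) * (ENNReal.ofReal ρ)^n := by
        refine Finset.sum_le_sum fun n _ => ?_
        refine (TT_iter_le μ (FF A δ z) (bb μ t) c (ENNReal.ofReal ρ) ENNReal.ofReal_ne_top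
          ENNReal.ofReal_ne_top (FF_contr μ A δ ρ hρ z) hb n x).trans ?_
        rw [mul_right_comm]
        gcongr
    _ = ENNReal.ofReal (Real.exp (2 * δ * ‖A‖)) * ∑ n ∈ Finset.range N, (ENNReal.ofReal ρ)^n := by
        rw [Finset.mul_sum]
    _ ≤ ENNReal.ofReal (Real.exp (2 * δ * ‖A‖)) * (1 - ENNReal.ofReal ρ)⁻¹ := by
        gcongr
        rw [← ENNReal.tsum_geometric]
        exact ENNReal.sum_le_tsum _

theorem sum_all (μ : Measure SL2) [IsProbabilityMeasure μ] (t : ℝ) (K : ENNReal)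
    (hK : ∀ x, t ≤ kappa x → ∀ N, ∑ n ∈ Finset.range N, (TT μ)^[n] (bb μ t) x ≤ K) (N : ℕ) :
    ∀ x, ∑ n ∈ Finset.range N, (TT μ)^[n] (bb μ t) x ≤ 1 + K := by
  induction N with
  | zero => intro x; simp
  | succ N ih =>
    intro x
    by_cases hx : t ≤ kappa x
    · exact (hK x hx _).trans le_add_self
    push Not at hx
    rw [Finset.sum_range_succ']
    have hc : Continuous (fun h : SL2 => kappa (h * x)) :=
      continuous_kappa.comp (continuous_id.mul continuous_const)
    have hS : MeasurableSet {h : SL2 | t ≤ kappa (h * x)} :=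
      measurableSet_le measurable_const hc.measurable
    have hcm : Continuous (fun h : SL2 => h * x) := continuous_id.mul continuous_const
    have e1 : ∑ n ∈ Finset.range N, (TT μ)^[n+1] (bb μ t) x =
        ∫⁻ h, ∑ n ∈ Finset.range N, (TT μ)^[n] (bb μ t) (h * x) ∂μ := by
      have hms : ∀ n ∈ Finset.range N,
          Measurable (fun h : SL2 => (TT μ)^[n] (bb μ t) (h * x)) :=
        fun n _ => (measurable_TT_iter μ _ (measurable_bb μ t) n).comp hcm.measurable
      rw [lintegral_finsetSum _ hms]
      refine Finset.sum_congr rfl fun n _ => ?_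
      rw [Function.iterate_succ_apply']
      rfl
    have e2 : (TT μ)^[0] (bb μ t) x =
        ∫⁻ h, {h : SL2 | t ≤ kappa (h * x)}.indicator 1 h ∂μ := by
      rw [lintegral_indicator_one hS]
      show μ _ = _
      congr 1
      ext h
      simp [hx]
    rw [e1, e2, add_comm, ← lintegral_add_left (measurable_one.indicator hS)]
    calc ∫⁻ h, ({h : SL2 | t ≤ kappa (h * x)}.indicator 1 h +
          ∑ n ∈ Finset.range N, (TT μ)^[n] (bb μ t) (h * x)) ∂μ
        ≤ ∫⁻ _, (1 + K) ∂μ := by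
          refine lintegral_mono fun h => ?_
          by_cases hh : t ≤ kappa (h * x)
          · have : h ∈ {h : SL2 | t ≤ kappa (h * x)} := hh
            rw [Set.indicator_of_mem this]
            exact add_le_add le_rfl (hK _ hh N)
          · have : h ∉ {h : SL2 | t ≤ kappa (h * x)} := hh
            rw [Set.indicator_of_notMem this, zero_add]
            exact ih _
      _ = 1 + K := by simp

theorem passage_set_measure_bounded
    (μ : Measure SL2) [IsProbabilityMeasure μ]
    (hmom : HasExpMoment μ) (hzd : ZariskiDense μ) :
    ∃ C > (0 : ℝ), ∀ t : ℝ,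
      (∑' n : ℕ, (μ.prod (μpi μ n)) {p : SL2 × (Fin n → SL2) |
          kappa (word p.2) < t ∧ t ≤ kappa (p.1 * word p.2)}) ≤
        ENNReal.ofReal C := by
  obtain ⟨A, δ, hδ, ρ, hρ1, hρ⟩ := contraction μ hmom hzd
  set K := ENNReal.ofReal (Real.exp (2 * δ * ‖A‖)) * (1 - ENNReal.ofReal ρ)⁻¹ with hK
  have hKt : K ≠ ⊤ := by
    refine ENNReal.mul_ne_top ENNReal.ofReal_ne_top (ENNReal.inv_ne_top.2 ?_)
    rw [ne_eq, tsub_eq_zero_iff_le, not_le]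
    exact ENNReal.ofReal_lt_one.2 hρ1
  refine ⟨1 + K.toReal, by positivity, fun t => ?_⟩
  have e : ENNReal.ofReal (1 + K.toReal) = 1 + K := by
    rw [ENNReal.ofReal_add zero_le_one ENNReal.toReal_nonneg, ENNReal.ofReal_one,
      ENNReal.ofReal_toReal hKt]
  rw [e]
  simp_rw [pass_eq μ t]
  rw [ENNReal.tsum_eq_iSup_nat]
  refine iSup_le fun N => ?_
  exact sum_all μ t K (fun x hx N => sum_above μ A δ ρ hδ hρ t x hx N) N 1

end
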